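/- Let X be the punctured Möbius band with boundary circles C₁ and C₂. Suppose f : X → X is a boundary-preserving map with f(C₂) ⊆ C₂ such that the restriction, viewed as a map f|C₂ : C₂ → C₂, is essential, while the restriction f|C₁ : C₁ → ∂X is inessential. Then f is boundary-homotopic to a map g : X → X having no fixed points in X ∖ ∂X, i.e., every fixed point of g lies in ∂X. -/

import Mathlib

open Set

namespace PMB

/-- The square [0,1] × [−1,1] as a subspace of ℝ². -/
def Sq : Set (ℝ × ℝ) := Set.Icc 0 1 ×ˢ Set.Icc (-1) 1

/-- The identification (0,y) ∼ (1,−y) on the square. -/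
def rel (p q : Sq) : Prop :=
  (p : ℝ × ℝ) = (q : ℝ × ℝ) ∨
  ((p : ℝ × ℝ).1 = 0 ∧ (q : ℝ × ℝ).1 = 1 ∧ (p : ℝ × ℝ).2 = -(q : ℝ × ℝ).2) ∨
  ((p : ℝ × ℝ).1 = 1 ∧ (q : ℝ × ℝ).1 = 0 ∧ (q : ℝ × ℝ).2 = -(p : ℝ × ℝ).2)

/-- The Möbius band: the quotient of the square by the identification. -/
def M := Quot rel

instance : TopologicalSpace M := inferInstanceAs (TopologicalSpace (Quot rel))

/-- The quotient map. -/
def qm : Sq → M := Quot.mk rel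

/-- The open disc of radius 1/4 centred at (1/2, 0). -/
def Bdisc : Set (ℝ × ℝ) := Metric.ball (1/2, 0) (1/4)

/-- The circle of radius 1/4 centred at (1/2, 0). -/
def Scirc : Set (ℝ × ℝ) := Metric.sphere (1/2, 0) (1/4)

/-- The punctured Möbius band, as a subset of the Möbius band. -/
def Xset : Set M := {m | m ∉ qm '' {p : Sq | (p : ℝ × ℝ) ∈ Bdisc}}

/-- The punctured Möbius band as a topological space. -/
abbrev X : Type := ↥Xset

/-- The boundary circle of the Möbius band. -/
def C1 : Set X := {x | ∃ p : Sq, qm p = (x : M) ∧ ((p : ℝ × ℝ).2 = 1 ∨ (p : ℝ × ℝ).2 = -1)}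

/-- The boundary circle coming from the removed disc. -/
def C2 : Set X := {x | ∃ p : Sq, qm p = (x : M) ∧ (p : ℝ × ℝ) ∈ Scirc}

/-- The boundary of the punctured Möbius band. -/
def Bd : Set X := C1 ∪ C2

/-- A self-map of the punctured Möbius band is boundary-preserving if it sends ∂X into ∂X. -/
def BoundaryPreserving (f : C(X, X)) : Prop := MapsTo f Bd Bd

/-- Two self-maps are boundary-homotopic if there is a homotopy between them keeping
∂X inside ∂X at all times. -/
def BoundaryHomotopic (f g : C(X, X)) : Prop :=
  ∃ H : ContinuousMap.Homotopy f g, ∀ x : X, x ∈ Bd → ∀ t : unitInterval, H (t, x) ∈ Bd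

/-- A continuous map is inessential if it is homotopic to a constant map. -/
def Inessential {α β : Type*} [TopologicalSpace α] [TopologicalSpace β] (f : C(α, β)) : Prop :=
  ∃ b : β, ContinuousMap.Homotopic f (ContinuousMap.const α b)

/-- A continuous map is essential if it is not homotopic to a constant map. -/
def Essential {α β : Type*} [TopologicalSpace α] [TopologicalSpace β] (f : C(α, β)) : Prop :=
  ¬ Inessential f

/-- The restriction of a self-map of X to a subset `s` mapped into a subset `t`,
as a continuous map between the subspaces. -/
def restrictMap (f : C(X, X)) {s t : Set X} (h : MapsTo f s t) : C(s, t) :=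
  ⟨fun x => ⟨f x, h x.2⟩, Continuous.subtype_mk (f.continuous.comp continuous_subtype_val) _⟩

/-!
The universal cover of `X` is a tree of strips `ℝ × [0, 1]`, one for each lift of `C₂`. Lift `f`,
read in polar coordinates around the removed disc, to this cover. When `f` is constant on `C₁` and
of degree `d ≠ 0` on `C₂`, the angles `θ` and `θ + 1 / 2` have the same image under `f` on `C₁`, so
the half turn in the source lifts to a deck transformation commuting with the rotation by `d`. Such
a transformation fixes the root strip, since a reduced word equal to its shift by `d ≠ 0` is empty.
Hence the lift of `f` can be pushed down the tree into the root line, equivariantly, which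
compresses `f` into `C₂`. Running this compression as one moves away from `C₁`, while
pushing the images away from `C₁`, leaves no fixed point in the collar, and the compressed map has
fixed points only on `C₂`.
-/

open Topology unitInterval NNReal

theorem isQuotientMap_restrictPreimage {α β : Type*} [TopologicalSpace α] [TopologicalSpace β]
    {f : α → β} (hf : IsQuotientMap f) {s : Set β} (hs : IsClosed s) :
    IsQuotientMap (s.restrictPreimage f) := by
  refine isQuotientMap_iff_isClosed.2 ⟨hf.surjective.restrictPreimage s, fun t =>
    ⟨fun ht => ht.preimage hf.continuous.restrictPreimage, fun ht => ?_⟩⟩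
  rw [hs.isClosedEmbedding_subtypeVal.isClosed_iff_image_isClosed, ← hf.isClosed_preimage,
    ← image_val_preimage_restrictPreimage]
  exact (hs.preimage hf.continuous).isClosedEmbedding_subtypeVal.isClosedMap _ ht

/-! ### The punctured Möbius band as a quotient -/

theorem rel_equivalence : Equivalence rel where
  refl _ := Or.inl rfl
  symm := by
    rintro p q (h | ⟨hp, hq, hy⟩ | ⟨hp, hq, hy⟩)
    · exact Or.inl h.symm
    · exact Or.inr (Or.inr ⟨hq, hp, hy⟩)
    · exact Or.inr (Or.inl ⟨hq, hp, hy⟩)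
  trans := by
    rintro ⟨⟨x₁, y₁⟩, _⟩ ⟨⟨x₂, y₂⟩, _⟩ ⟨⟨x₃, y₃⟩, _⟩ h h'
    simp only [rel, Prod.mk.injEq] at h h' ⊢
    grind

theorem qm_eq_qm_iff {p q : Sq} : qm p = qm q ↔ rel p q :=
  ⟨fun h => rel_equivalence.eqvGen_iff.1 (Quot.eqvGen_exact h), Quot.sound⟩

theorem isQuotientMap_qm : IsQuotientMap qm :=
  isQuotientMap_quot_mk

theorem mem_Bdisc_iff {p : ℝ × ℝ} : p ∈ Bdisc ↔ max |p.1 - 1 / 2| |p.2| < 1 / 4 := by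
  rw [Bdisc, Metric.mem_ball, Prod.dist_eq, Real.dist_eq, Real.dist_eq, sub_zero]

theorem mem_Scirc_iff {p : ℝ × ℝ} : p ∈ Scirc ↔ max |p.1 - 1 / 2| |p.2| = 1 / 4 := by
  rw [Scirc, Metric.mem_sphere, Prod.dist_eq, Real.dist_eq, Real.dist_eq, sub_zero]

theorem eq_of_rel_of_abs_lt {p q : Sq} (h : rel p q) (hp : |(p : ℝ × ℝ).1 - 1 / 2| < 1 / 2) :
    p = q := by
  rw [abs_lt] at hp
  rcases h with h | ⟨h, -⟩ | ⟨h, -⟩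
  · exact Subtype.ext h
  all_goals linarith

theorem qm_preimage_qm_image_Bdisc :
    qm ⁻¹' (qm '' {p : Sq | (p : ℝ × ℝ) ∈ Bdisc}) = {p : Sq | (p : ℝ × ℝ) ∈ Bdisc} := by
  refine Subset.antisymm ?_ (subset_preimage_image qm _)
  rintro p ⟨q, hq, hqp⟩
  have hqx : |(q : ℝ × ℝ).1 - 1 / 2| < 1 / 2 := by
    have := (max_lt_iff.1 (mem_Bdisc_iff.1 hq)).1
    linarith
  exact eq_of_rel_of_abs_lt (qm_eq_qm_iff.1 hqp) hqx ▸ hq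

theorem qm_mem_Xset_iff {p : Sq} : qm p ∈ Xset ↔ (p : ℝ × ℝ) ∉ Bdisc :=
  not_congr (Set.ext_iff.1 qm_preimage_qm_image_Bdisc p)

theorem isClosed_Xset : IsClosed Xset := by
  refine isOpen_compl_iff.1 ?_
  have hcompl : Xsetᶜ = qm '' {p : Sq | (p : ℝ × ℝ) ∈ Bdisc} := compl_compl _
  rw [hcompl, ← isQuotientMap_qm.isOpen_preimage, qm_preimage_qm_image_Bdisc]
  exact Metric.isOpen_ball.preimage continuous_subtype_val

/-- The square with the open disc removed, of which `X` is a quotient. -/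
abbrev PuncturedSq : Set Sq := preimage qm Xset

/-- The quotient map from the punctured square onto `X`. -/
abbrev qX : PuncturedSq → X := Xset.restrictPreimage qm

theorem isQuotientMap_qX : IsQuotientMap qX :=
  isQuotientMap_restrictPreimage isQuotientMap_qm isClosed_Xset

theorem qX_eq_qX_iff {p q : PuncturedSq} : qX p = qX q ↔ rel p q :=
  Subtype.ext_iff.trans qm_eq_qm_iff

theorem qX_mem_C1_iff {p : PuncturedSq} : qX p ∈ C1 ↔ |(p : ℝ × ℝ).2| = 1 := by
  refine ⟨?_, fun h => ⟨p, rfl, eq_or_eq_neg_of_abs_eq h⟩⟩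
  rintro ⟨q, hq, hy⟩
  have hrel : rel q p := qm_eq_qm_iff.1 hq
  grind [rel]

theorem qX_mem_C2_iff {p : PuncturedSq} : qX p ∈ C2 ↔ (p : ℝ × ℝ) ∈ Scirc := by
  refine ⟨?_, fun h => ⟨p, rfl, h⟩⟩
  rintro ⟨q, hq, hS⟩
  have hqx : |(q : ℝ × ℝ).1 - 1 / 2| < 1 / 2 := by
    have := (le_max_left _ _).trans (mem_Scirc_iff.1 hS).le
    linarith
  exact eq_of_rel_of_abs_lt (qm_eq_qm_iff.1 hq) hqx ▸ hS

/-! ### Directions -/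

/-- The point of the unit sphere of the sup norm on `ℝ × ℝ` in the direction of angle `2πθ`. The
disc removed from the Möbius band is a ball of that norm. -/
noncomputable def dir (θ : ℝ) : ℝ × ℝ :=
  ‖(Real.cos (2 * Real.pi * θ), Real.sin (2 * Real.pi * θ))‖⁻¹ •
    (Real.cos (2 * Real.pi * θ), Real.sin (2 * Real.pi * θ))

theorem norm_cos_sin_pos (θ : ℝ) : 0 < ‖(Real.cos θ, Real.sin θ)‖ := by
  refine norm_pos_iff.2 fun h => ?_
  have hc : Real.cos θ = 0 := congrArg Prod.fst h
  have hs : Real.sin θ = 0 := congrArg Prod.snd h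
  simpa [hc, hs] using Real.sin_sq_add_cos_sq θ

theorem continuous_dir : Continuous dir := by
  have h (θ : ℝ) := (norm_cos_sin_pos (2 * Real.pi * θ)).ne'
  unfold dir
  fun_prop (disch := exact h _)

theorem norm_dir (θ : ℝ) : ‖dir θ‖ = 1 :=
  norm_smul_inv_norm (𝕜 := ℝ) (norm_pos_iff.1 (norm_cos_sin_pos _))

theorem dir_add_half (θ : ℝ) : dir (θ + 1 / 2) = -dir θ := by
  have h : 2 * Real.pi * (θ + 1 / 2) = 2 * Real.pi * θ + Real.pi := by ring
  rw [dir, dir, h, Real.cos_add_pi, Real.sin_add_pi, ← Prod.neg_mk, norm_neg, smul_neg]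

theorem cos_sin_eq_of_smul_eq {a b φ ψ : ℝ} (ha : 0 < a) (hb : 0 < b)
    (h : a • (Real.cos φ, Real.sin φ) = b • (Real.cos ψ, Real.sin ψ)) :
    Real.cos φ = Real.cos ψ ∧ Real.sin φ = Real.sin ψ := by
  have hc : a * Real.cos φ = b * Real.cos ψ := congrArg Prod.fst h
  have hs : a * Real.sin φ = b * Real.sin ψ := congrArg Prod.snd h
  have hab : a = b := by
    refine (sq_eq_sq₀ ha.le hb.le).1 ?_
    calc a ^ 2 = (a * Real.cos φ) ^ 2 + (a * Real.sin φ) ^ 2 := by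
          linear_combination -a ^ 2 * Real.sin_sq_add_cos_sq φ
      _ = b ^ 2 := by rw [hc, hs]; linear_combination b ^ 2 * Real.sin_sq_add_cos_sq ψ
  subst hab
  exact ⟨mul_left_cancel₀ ha.ne' hc, mul_left_cancel₀ ha.ne' hs⟩

theorem dir_eq_dir_iff {θ θ' : ℝ} : dir θ = dir θ' ↔ ∃ n : ℤ, θ' = θ + n := by
  constructor
  · intro h
    obtain ⟨hc, hs⟩ := cos_sin_eq_of_smul_eq (inv_pos.2 (norm_cos_sin_pos _))
      (inv_pos.2 (norm_cos_sin_pos _)) h.symm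
    obtain ⟨n, hn⟩ := Real.Angle.angle_eq_iff_two_pi_dvd_sub.1 (Real.Angle.cos_sin_inj hc hs)
    exact ⟨n, by linear_combination (norm := (field_simp; ring)) hn / (2 * Real.pi)⟩
  · rintro ⟨n, rfl⟩
    have h : 2 * Real.pi * (θ + n) = 2 * Real.pi * θ + n * (2 * Real.pi) := by ring
    rw [dir, dir, h, Real.cos_add_int_mul_two_pi, Real.sin_add_int_mul_two_pi]

theorem exists_dir_eq {w : ℝ × ℝ} (hw : ‖w‖ = 1) : ∃ θ, dir θ = w := by
  set z : ℂ := ⟨w.1, w.2⟩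
  have hz : z ≠ 0 := fun h => by
    have hw0 : w = 0 := Prod.ext (congrArg Complex.re h) (congrArg Complex.im h)
    simp [hw0] at hw
  refine ⟨z.arg / (2 * Real.pi), ?_⟩
  have hnorm : (Real.cos z.arg, Real.sin z.arg) = ‖z‖⁻¹ • w := by
    rw [Complex.cos_arg hz, Complex.sin_arg]
    ext <;> simp [z, div_eq_inv_mul]
  rw [dir, mul_div_cancel₀ _ (by positivity), hnorm, norm_smul, hw, norm_inv, norm_norm, mul_one,
    inv_inv, smul_inv_smul₀ (norm_ne_zero_iff.2 hz)]

/-- The angles `2πθ` near `πm`. They are those at which `dir` meets the vertical sides `x = ±1` of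
the unit sphere. -/
def Gate (m : ℤ) (θ : ℝ) : Prop := |θ - m / 2| ≤ 1 / 8

theorem cos_four_pi_nonneg_iff (θ : ℝ) :
    0 ≤ Real.cos (4 * Real.pi * θ) ↔ ∃ m, Gate m θ := by
  have hperiod (m : ℤ) :
      Real.cos (4 * Real.pi * θ) = Real.cos |4 * Real.pi * (θ - m / 2)| := by
    rw [Real.cos_abs, ← Real.cos_sub_int_mul_two_pi _ m]
    ring_nf
  have habs (m : ℤ) : |4 * Real.pi * (θ - m / 2)| = 4 * Real.pi * |θ - m / 2| := by
    rw [abs_mul, abs_of_pos (by positivity)]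
  constructor
  · intro h
    by_contra! hno
    have hround := abs_sub_round (2 * θ)
    have hle : |θ - round (2 * θ) / 2| ≤ 1 / 4 := by
      rw [abs_le] at hround ⊢
      constructor <;> linarith
    have hlt := not_le.1 (hno (round (2 * θ)))
    rw [hperiod (round (2 * θ)), habs] at h
    refine h.not_gt (Real.cos_neg_of_pi_div_two_lt_of_lt ?_ ?_) <;> nlinarith [Real.pi_pos]
  · rintro ⟨m, hm⟩
    rw [hperiod m, habs]
    unfold Gate at hm
    refine Real.cos_nonneg_of_neg_pi_div_two_le_of_le ?_ ?_ <;>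
      nlinarith [Real.pi_pos, abs_nonneg (θ - m / 2)]

theorem abs_fst_dir_eq_one_iff {θ : ℝ} : |(dir θ).1| = 1 ↔ ∃ m, Gate m θ := by
  have hpos : 0 < max |Real.cos (2 * Real.pi * θ)| |Real.sin (2 * Real.pi * θ)| :=
    norm_cos_sin_pos _
  have hfst : |(dir θ).1| = |Real.cos (2 * Real.pi * θ)| /
      max |Real.cos (2 * Real.pi * θ)| |Real.sin (2 * Real.pi * θ)| := by
    rw [dir, Prod.smul_fst, smul_eq_mul, abs_mul, abs_inv, abs_norm, inv_mul_eq_div]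
    rfl
  have hcos : Real.cos (4 * Real.pi * θ) =
      Real.cos (2 * Real.pi * θ) ^ 2 - Real.sin (2 * Real.pi * θ) ^ 2 := by
    rw [← Real.cos_two_mul']
    ring_nf
  rw [← cos_four_pi_nonneg_iff, hcos, sub_nonneg, sq_le_sq, hfst, div_eq_one_iff_eq hpos.ne',
    eq_comm, max_eq_left_iff]

/-! ### Polar coordinates -/

/-- The domain of the polar coordinates `(θ, r)`: the angle is `2πθ`, and `r` runs from `0` on `C₂`
to `1` on the boundary of the square. -/
abbrev Strip : Type := ℝ × I

/-- Polar coordinates on the punctured square, centred at the centre of the square. -/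
noncomputable def offset (z : Strip) : ℝ × ℝ :=
  ((1 + z.2) / 4 * (dir z.1).1, (1 + 3 * z.2) / 4 * (dir z.1).2)

theorem continuous_offset : Continuous offset := by
  have hdir : Continuous fun z : Strip => dir z.1 := continuous_dir.comp continuous_fst
  exact (Continuous.mul (by fun_prop) hdir.fst).prodMk (Continuous.mul (by fun_prop) hdir.snd)

theorem abs_offset_fst (z : Strip) : |(offset z).1| = (1 + z.2) / 4 * |(dir z.1).1| := by
  rw [offset, abs_mul, abs_of_nonneg (by linarith [z.2.2.1])]

theorem abs_offset_snd (z : Strip) : |(offset z).2| = (1 + 3 * z.2) / 4 * |(dir z.1).2| := by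
  rw [offset, abs_mul, abs_of_nonneg (by linarith [z.2.2.1])]

theorem abs_dir_fst_le (θ : ℝ) : |(dir θ).1| ≤ 1 := (norm_fst_le _).trans (norm_dir θ).le

theorem abs_dir_snd_le (θ : ℝ) : |(dir θ).2| ≤ 1 := (norm_snd_le _).trans (norm_dir θ).le

theorem abs_dir_fst_eq_or (θ : ℝ) : |(dir θ).1| = 1 ∨ |(dir θ).2| = 1 := by
  have h : max |(dir θ).1| |(dir θ).2| = 1 := norm_dir θ
  rcases max_choice |(dir θ).1| |(dir θ).2| with hm | hm
  exacts [.inl (hm ▸ h), .inr (hm ▸ h)]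

theorem abs_offset_fst_le (z : Strip) : |(offset z).1| ≤ (1 + z.2) / 4 := by
  rw [abs_offset_fst]
  exact mul_le_of_le_one_right (by linarith [z.2.2.1]) (abs_dir_fst_le _)

theorem abs_offset_snd_le (z : Strip) : |(offset z).2| ≤ (1 + 3 * z.2) / 4 := by
  rw [abs_offset_snd]
  exact mul_le_of_le_one_right (by linarith [z.2.2.1]) (abs_dir_snd_le _)

theorem abs_offset_eq_or (z : Strip) :
    |(offset z).1| = (1 + z.2) / 4 ∨ |(offset z).2| = (1 + 3 * z.2) / 4 := by
  rw [abs_offset_fst, abs_offset_snd]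
  exact (abs_dir_fst_eq_or z.1).imp (by simp +contextual) (by simp +contextual)

theorem offset_eq_offset_iff {z z' : Strip} :
    offset z = offset z' ↔ z.2 = z'.2 ∧ ∃ n : ℤ, z'.1 = z.1 + n := by
  rw [← dir_eq_dir_iff]
  constructor
  · intro h
    have hr : z.2 = z'.2 := by
      refine Subtype.ext (le_antisymm ?_ ?_)
      · rcases abs_offset_eq_or z with hz | hz <;>
          linarith [h ▸ hz, abs_offset_fst_le z', abs_offset_snd_le z']
      · rcases abs_offset_eq_or z' with hz | hz <;>
          linarith [h ▸ hz, abs_offset_fst_le z, abs_offset_snd_le z]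
    have hpos := z'.2.2.1
    simp only [offset, hr, Prod.mk.injEq] at h
    exact ⟨hr, Prod.ext (mul_left_cancel₀ (by positivity) h.1)
      (mul_left_cancel₀ (by positivity) h.2)⟩
  · rintro ⟨hr, hθ⟩
    rw [offset, offset, hr, hθ]

theorem exists_offset_eq {w : ℝ × ℝ} (hx : |w.1| ≤ 1 / 2) (hy : |w.2| ≤ 1)
    (hw : 1 / 4 ≤ max |w.1| |w.2|) : ∃ z, offset z = w := by
  set r := max (4 * |w.1| - 1) ((4 * |w.2| - 1) / 3)
  have hrx : 4 * |w.1| - 1 ≤ r := le_max_left _ _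
  have hry : (4 * |w.2| - 1) / 3 ≤ r := le_max_right _ _
  have hr0 : 0 ≤ r := by rcases le_max_iff.1 hw with h | h <;> linarith
  have hr1 : r ≤ 1 := max_le (by linarith) (by linarith)
  have hnorm : ‖(w.1 / ((1 + r) / 4), w.2 / ((1 + 3 * r) / 4))‖ = 1 := by
    have hx0 : 0 < (1 + r) / 4 := by positivity
    have hy0 : 0 < (1 + 3 * r) / 4 := by positivity
    rw [Prod.norm_mk, Real.norm_eq_abs, Real.norm_eq_abs, abs_div _ ((1 + r) / 4),
      abs_div _ ((1 + 3 * r) / 4), abs_of_pos hx0, abs_of_pos hy0]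
    refine le_antisymm (max_le ?_ ?_) (le_max_iff.2 ?_)
    · rw [div_le_one hx0]
      linarith
    · rw [div_le_one hy0]
      linarith
    · rw [one_le_div hx0, one_le_div hy0]
      exact (max_choice (4 * |w.1| - 1) ((4 * |w.2| - 1) / 3)).imp
        (fun h => by linarith) (fun h => by linarith)
  obtain ⟨θ, hθ⟩ := exists_dir_eq hnorm
  refine ⟨(θ, ⟨r, hr0, hr1⟩), ?_⟩
  rw [offset, hθ]
  exact Prod.ext (mul_div_cancel₀ _ (by positivity)) (mul_div_cancel₀ _ (by positivity))

theorem offset_add_half (θ : ℝ) (r : I) : offset (θ + 1 / 2, r) = -offset (θ, r) := by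
  simp only [offset, dir_add_half, Prod.fst_neg, Prod.snd_neg, mul_neg, Prod.neg_mk]

theorem abs_offset_fst_eq_half_iff {z : Strip} :
    |(offset z).1| = 1 / 2 ↔ z.2 = 1 ∧ ∃ m, Gate m z.1 := by
  rw [← abs_fst_dir_eq_one_iff, abs_offset_fst]
  have hr : (z.2 : ℝ) ≤ 1 := z.2.2.2
  constructor
  · intro h
    have hr1 : (z.2 : ℝ) = 1 := by nlinarith [abs_dir_fst_le z.1, z.2.2.1]
    exact ⟨Subtype.ext hr1, by rw [hr1] at h; linarith⟩
  · rintro ⟨hr1, hθ⟩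
    rw [hθ, hr1]
    norm_num

theorem offset_add_center_mem (z : Strip) : offset z + (1 / 2, 0) ∈ Sq := by
  have hx := abs_le.1 (abs_offset_fst_le z)
  have hy := abs_le.1 (abs_offset_snd_le z)
  have hr : (z.2 : ℝ) ≤ 1 := z.2.2.2
  refine ⟨⟨?_, ?_⟩, ?_, ?_⟩ <;> simp only [Prod.fst_add, Prod.snd_add] <;> linarith

theorem offset_add_center_notMem_Bdisc (z : Strip) : offset z + (1 / 2, 0) ∉ Bdisc := by
  have hr : 0 ≤ (z.2 : ℝ) := z.2.2.1
  simp only [mem_Bdisc_iff, Prod.fst_add, Prod.snd_add, add_sub_cancel_right, add_zero, not_lt,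
    le_max_iff]
  exact (abs_offset_eq_or z).imp (fun h => by linarith) (fun h => by linarith)

/-- Polar coordinates with values in the punctured square. -/
noncomputable def polarSq (z : Strip) : PuncturedSq :=
  ⟨⟨offset z + (1 / 2, 0), offset_add_center_mem z⟩,
    qm_mem_Xset_iff.2 (offset_add_center_notMem_Bdisc z)⟩

theorem continuous_polarSq : Continuous polarSq :=
  ((continuous_offset.add continuous_const).subtype_mk _).subtype_mk _

theorem polarSq_eq_polarSq_iff {z z' : Strip} : polarSq z = polarSq z' ↔ offset z = offset z' := by
  simp only [polarSq, Subtype.mk.injEq, add_left_inj]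

theorem polarSq_surjective : Function.Surjective polarSq := by
  rintro ⟨⟨w, hx, hy⟩, hw⟩
  obtain ⟨z, hz⟩ := exists_offset_eq (w := w - (1 / 2, 0))
    (abs_le.2 ⟨by simpa using hx.1, by norm_num; linarith [hx.2]⟩)
    (abs_le.2 ⟨by simpa using hy.1, by simpa using hy.2⟩)
    (by simpa only [mem_Bdisc_iff, not_lt, Prod.fst_sub, Prod.snd_sub, sub_zero] using
      qm_mem_Xset_iff.1 hw)
  exact ⟨z, Subtype.ext (Subtype.ext (by simp [polarSq, hz]))⟩

theorem isQuotientMap_polarSq : IsQuotientMap polarSq := by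
  set g : Icc (0 : ℝ) 1 × I → PuncturedSq := polarSq ∘ Prod.map Subtype.val id
  have hg : Continuous g := continuous_polarSq.comp (by fun_prop)
  have hsurj : Function.Surjective g := fun p => by
    obtain ⟨z, rfl⟩ := polarSq_surjective p
    refine ⟨(⟨Int.fract z.1, Int.fract_nonneg _, (Int.fract_lt_one _).le⟩, z.2), ?_⟩
    exact polarSq_eq_polarSq_iff.2
      (offset_eq_offset_iff.2 ⟨rfl, ⌊z.1⌋, (Int.fract_add_floor z.1).symm⟩)
  exact .of_comp (by fun_prop) continuous_polarSq (hg.isClosedMap.isQuotientMap hg hsurj)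

/-- Polar coordinates on the punctured Möbius band. -/
noncomputable def polar (z : Strip) : X := qX (polarSq z)

theorem isQuotientMap_polar : IsQuotientMap polar := isQuotientMap_qX.comp isQuotientMap_polarSq

theorem continuous_polar : Continuous polar := isQuotientMap_polar.continuous

theorem polar_surjective : Function.Surjective polar := isQuotientMap_polar.surjective

theorem rel_polarSq_iff {z z' : Strip} : rel (polarSq z) (polarSq z') ↔
    offset z = offset z' ∨ |(offset z).1| = 1 / 2 ∧ offset z' = -offset z := by
  have habs : |(offset z).1| = 1 / 2 ↔ (offset z).1 = 1 / 2 ∨ (offset z).1 = -(1 / 2) :=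
    abs_eq (by norm_num)
  simp only [rel, polarSq, Prod.ext_iff, Prod.fst_add, Prod.snd_add, Prod.fst_neg, Prod.snd_neg,
    habs]
  grind

theorem polar_eq_polar_iff {z z' : Strip} : polar z = polar z' ↔
    (z.2 = z'.2 ∧ ∃ n : ℤ, z'.1 = z.1 + n) ∨
      (z.2 = 1 ∧ z'.2 = 1 ∧ (∃ m, Gate m z.1) ∧ ∃ n : ℤ, z'.1 = z.1 + 1 / 2 + n) := by
  have hneg : offset z' = -offset z ↔ z.2 = z'.2 ∧ ∃ n : ℤ, z'.1 = z.1 + 1 / 2 + n := by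
    rw [← offset_add_half, eq_comm, offset_eq_offset_iff]
  rw [polar, polar, qX_eq_qX_iff, rel_polarSq_iff, offset_eq_offset_iff,
    abs_offset_fst_eq_half_iff, hneg]
  grind

theorem polar_add_int (θ : ℝ) (r : I) (n : ℤ) : polar (θ + n, r) = polar (θ, r) :=
  (polar_eq_polar_iff (z := (θ, r)) (z' := (θ + n, r)).2 (.inl ⟨rfl, n, rfl⟩)).symm

theorem polar_add_half {m : ℤ} {θ : ℝ} (hθ : Gate m θ) : polar (θ + 1 / 2, 1) = polar (θ, 1) :=
  (polar_eq_polar_iff.2 (.inr ⟨rfl, rfl, ⟨m, hθ⟩, 0, by simp⟩)).symm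

theorem polar_mem_C1_iff {z : Strip} : polar z ∈ C1 ↔ |(offset z).2| = 1 := by
  rw [polar, qX_mem_C1_iff, polarSq, Prod.snd_add, add_zero]

theorem polar_mem_C2_iff {z : Strip} : polar z ∈ C2 ↔ z.2 = 0 := by
  simp only [polar, qX_mem_C2_iff, mem_Scirc_iff, polarSq, Prod.fst_add, Prod.snd_add,
    add_sub_cancel_right, add_zero, Subtype.ext_iff, Icc.coe_zero]
  have hx := abs_offset_fst_le z
  have hy := abs_offset_snd_le z
  constructor
  · intro h
    have hx' := (le_max_left _ _).trans h.le
    have hy' := (le_max_right _ _).trans h.le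
    rcases abs_offset_eq_or z with hz | hz <;> linarith [z.2.2.1]
  · intro hr
    rw [hr] at hx hy
    refine le_antisymm (max_le (by linarith) (by linarith)) (le_max_iff.2 ?_)
    exact (abs_offset_eq_or z).imp (fun h => by linarith) (fun h => by linarith)

theorem exists_gate_or_polar_mem_C1 (θ : ℝ) :
    (∃ m, Gate m θ) ∨ (polar (θ, 1) ∈ C1 ∧ polar (θ + 1 / 2, 1) ∈ C1) := by
  rw [← abs_fst_dir_eq_one_iff]
  refine (abs_dir_fst_eq_or θ).imp_right fun h => ?_
  have h1 : |(offset (θ, 1)).2| = 1 := by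
    rw [abs_offset_snd, h]
    norm_num
  rw [polar_mem_C1_iff, polar_mem_C1_iff, offset_add_half, Prod.snd_neg, abs_neg]
  exact ⟨h1, h1⟩

/-! ### Covering maps out of quotient spaces -/

theorem eq_of_quot_mk_eq_of_mem {D F : Type*} {R : D → D → Prop} {W : Set D}
    (hW : ∀ d d', R d d' → (d ∈ W ↔ d' ∈ W)) {s : D → F}
    (hs : ∀ d d', R d d' → d ∈ W → s d = s d') {d d' : D} (h : Quot.mk R d = Quot.mk R d')
    (hd : d ∈ W) : s d' = s d := by
  have hset := congrArg (Quot.lift (fun d => {v | d ∈ W ∧ s d = v}) fun d d' h => by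
    ext v
    grind) h
  exact (hset.subset ⟨hd, rfl⟩).2

section EvenlyCovered

variable {D E T Y F : Type*} [TopologicalSpace D] [TopologicalSpace E] [TopologicalSpace T]
  [TopologicalSpace Y] [TopologicalSpace F] [DiscreteTopology F] {p : E → Y} {q : T → Y}

theorem isEvenlyCovered_of_local_sections (hp : Continuous p) (hq : IsQuotientMap q) {U : Set Y}
    (hU : IsOpen U) {sheet : E → F} (hsheet : ContinuousOn sheet (p ⁻¹' U)) {sec : F → T → E}
    (hsec : ∀ v, ContinuousOn (sec v) (q ⁻¹' U)) (hp_sec : ∀ v z, q z ∈ U → p (sec v z) = q z)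
    (hsheet_sec : ∀ v z, q z ∈ U → sheet (sec v z) = v)
    (hsec_sheet : ∀ e z, q z ∈ U → q z = p e → sec (sheet e) z = e) {y : Y} (hy : y ∈ U) :
    IsEvenlyCovered p y F := by
  have hsec_congr {v z z'} (hz : q z' ∈ U) (h : q z = q z') : sec v z = sec v z' := by
    simpa only [hsheet_sec v z' hz] using
      hsec_sheet (sec v z') z (h ▸ hz) (h.trans (hp_sec v z' hz).symm)
  let lift : U → q ⁻¹' U := fun u =>
    ⟨Function.surjInv hq.surjective u, by
      rw [mem_preimage, Function.surjInv_eq hq.surjective]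
      exact u.2⟩
  have hlift (u : U) : q (lift u) = u := Function.surjInv_eq hq.surjective _
  let inv : U × F → p ⁻¹' U := fun w =>
    ⟨sec w.2 (lift w.1), by rw [mem_preimage, hp_sec _ _ (lift w.1).2, hlift]; exact w.1.2⟩
  have hinv : Continuous inv := by
    refine (continuous_prod_of_discrete_right.2 fun v => ?_).subtype_mk _
    rw [(hq.restrictPreimage_isOpen hU).continuous_iff]
    refine (continuousOn_iff_continuous_domRestrict.1 (hsec v)).congr fun z => ?_
    exact hsec_congr (lift _).2 (hlift ⟨q z, z.2⟩).symm
  refine ⟨inferInstance, U, hy, hU, hU.preimage hp, ⟨⟨fun e => (⟨p e, e.2⟩, sheet e), inv,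
    fun e => Subtype.ext ?_, fun w => Prod.ext (Subtype.ext ?_) ?_⟩, ?_, hinv⟩, fun _ => rfl⟩
  · exact hsec_sheet e _ (lift _).2 (hlift _)
  · exact (hp_sec _ _ (lift _).2).trans (hlift _)
  · exact hsheet_sec _ _ (lift _).2
  · exact (hp.comp continuous_subtype_val).subtype_mk _ |>.prodMk
      (continuousOn_iff_continuous_domRestrict.1 hsheet)

/-- Local sections and sheet numbers are given upstairs, on the space `D` of which the covering
space is a quotient. -/
theorem isEvenlyCovered_quot {R : D → D → Prop} {p : Quot R → Y} (hp : Continuous p)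
    (hq : IsQuotientMap q) {π : D → T} (hpπ : ∀ d, p (Quot.mk R d) = q (π d)) {V : Set T}
    (hV : IsOpen V) (hVsat : ∀ z z', q z = q z' → z ∈ V → z' ∈ V) {sheet : D → F}
    (hsheet : ContinuousOn sheet (π ⁻¹' V))
    (hsheetR : ∀ d d', R d d' → π d ∈ V → sheet d = sheet d') {sec : F → T → D}
    (hsec : ∀ v, ContinuousOn (sec v) V) (hq_sec : ∀ v, ∀ z ∈ V, q (π (sec v z)) = q z)
    (hsheet_sec : ∀ v, ∀ z ∈ V, sheet (sec v z) = v)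
    (hsec_sheet : ∀ d, ∀ z ∈ V, q z = q (π d) → Quot.mk R (sec (sheet d) z) = Quot.mk R d)
    {z : T} (hz : z ∈ V) : IsEvenlyCovered p (q z) F := by
  have hVq : q ⁻¹' (q '' V) = V :=
    Subset.antisymm (fun z' ⟨w, hw, h⟩ => hVsat w z' h hw) (subset_preimage_image q V)
  have hU : IsOpen (q '' V) := by rwa [← hq.isOpen_preimage, hVq]
  have hpre : Quot.mk R ⁻¹' (p ⁻¹' (q '' V)) = π ⁻¹' V := by
    conv_rhs => rw [← hVq]
    ext d
    simp only [mem_preimage, hpπ]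
  have hR {d d'} (h : R d d') : q (π d) = q (π d') := by rw [← hpπ, ← hpπ, Quot.sound h]
  have hsheet_congr {d d'} (h : Quot.mk R d = Quot.mk R d') (hd : π d ∈ V) :
      sheet d' = sheet d := by
    refine eq_of_quot_mk_eq_of_mem (W := π ⁻¹' V) (fun d d' h => ?_) hsheetR h hd
    exact ⟨hVsat _ _ (hR h), hVsat _ _ (hR h).symm⟩
  have hout (d : D) : Quot.mk R (Quot.mk R d).out = Quot.mk R d := Quot.out_eq _
  refine isEvenlyCovered_of_local_sections (U := q '' V) (sheet := fun e => sheet e.out)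
    (sec := fun v z => Quot.mk R (sec v z)) hp hq hU ?_ ?_ ?_ ?_ ?_ (mem_image_of_mem q hz)
  · rw [isQuotientMap_quot_mk.continuousOn_isOpen_iff (hU.preimage hp), hpre]
    exact hsheet.congr fun d hd => hsheet_congr (hout d).symm hd
  · intro v
    rw [hVq]
    exact continuous_quot_mk.comp_continuousOn (hsec v)
  · intro v z hz
    rw [hpπ]
    exact hq_sec v z (hVq.subset hz)
  · intro v z hz
    have hz : z ∈ V := hVq.subset hz
    rw [hsheet_congr (hout _).symm (hVsat z _ (hq_sec v z hz).symm hz), hsheet_sec v z hz]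
  · intro e z hz he
    obtain ⟨d, rfl⟩ := Quot.exists_rep e
    have hz : z ∈ V := hVq.subset hz
    rw [hpπ] at he
    rw [hsheet_congr (hout d).symm (hVsat z _ he hz)]
    exact hsec_sheet d z hz he

end EvenlyCovered

/-! ### The tree of strips -/

/-- Words in `ℤ` without a factor `[n + 1, n]`. -/
abbrev Reduced (l : List ℤ) : Prop := l.IsChain fun a b => a ≠ b + 1

/-- The vertices of the tree of strips: `n :: l` names the strip reached from the strip `l` by
crossing its gate `n`; that crossing is undone by crossing the gate `n + 1`. -/
def Word : Type := {l : List ℤ // Reduced l}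

instance : TopologicalSpace Word := ⊥

instance : DiscreteTopology Word := ⟨rfl⟩

/-- Gluing of the strips: gate `n` of the strip `l` to gate `n + 1` of the strip `n :: l`. -/
inductive Glued : Word × Strip → Word × Strip → Prop
  | gate {n : ℤ} {l : List ℤ} (h : Reduced (n :: l)) {θ : ℝ}
      (hθ : Gate n θ) : Glued (⟨l, h.tail⟩, (θ, 1)) (⟨n :: l, h⟩, (θ + 1 / 2, 1))

/-- The tree of strips, which turns out to be the universal cover of `X`. -/
abbrev Tree : Type := Quot Glued

/-- The covering projection of the tree of strips. -/
noncomputable def Tree.proj : Tree → X :=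
  Quot.lift (fun d => polar d.2) fun _ _ h => by
    cases h with
    | gate _ hθ => exact (polar_add_half hθ).symm

theorem Tree.continuous_proj : Continuous Tree.proj :=
  continuous_quot_lift _ (continuous_polar.comp continuous_snd)

/-- The gate of the tree seen from its other side: crossing gate `v.2` of the strip `v.1` leads to
the gate `(cross v).2` of the strip `(cross v).1`. -/
def cross : Word × ℤ → Word × ℤ
  | (⟨[], _⟩, m) => (⟨[m], .singleton m⟩, m + 1)
  | (⟨n :: l, h⟩, m) =>
    if hm : m = n + 1 then (⟨l, h.tail⟩, n) else (⟨m :: n :: l, h.cons_cons hm⟩, m + 1)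

theorem cross_of_isChain {n : ℤ} {l : List ℤ} (h : Reduced (n :: l)) :
    cross (⟨l, h.tail⟩, n) = (⟨n :: l, h⟩, n + 1) := by
  cases l with
  | nil => rfl
  | cons a l => exact dif_neg (List.isChain_cons_cons.1 h).1

theorem cross_cons {n : ℤ} {l : List ℤ} (h : Reduced (n :: l)) :
    cross (⟨n :: l, h⟩, n + 1) = (⟨l, h.tail⟩, n) := dif_pos rfl

/-- Every crossing inverts or is inverted by one that lengthens the word. -/
theorem cross_cases {P : Word × ℤ → Word × ℤ → Prop}
    (hlong : ∀ (n : ℤ) (l : List ℤ) (h : Reduced (n :: l)),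
      P (⟨l, h.tail⟩, n) (⟨n :: l, h⟩, n + 1) ∧ P (⟨n :: l, h⟩, n + 1) (⟨l, h.tail⟩, n))
    (v : Word × ℤ) : P v (cross v) := by
  obtain ⟨⟨l, h⟩, m⟩ := v
  by_cases hm : Reduced (m :: l)
  · rw [cross_of_isChain hm]
    exact (hlong m l hm).1
  · cases l with
    | nil => exact absurd (.singleton m) hm
    | cons n l =>
      obtain rfl : m = n + 1 := by_contra fun hne => hm (h.cons_cons hne)
      rw [cross_cons]
      exact (hlong n l h).2

theorem cross_cross (v : Word × ℤ) : cross (cross v) = v :=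
  cross_cases (P := fun v w => cross w = v)
    (fun _ _ h => ⟨cross_cons h, cross_of_isChain h⟩) v

theorem even_cross_snd (v : Word × ℤ) : Even (cross v).2 ↔ ¬Even v.2 :=
  cross_cases (P := fun v w => Even w.2 ↔ ¬Even v.2)
    (fun _ _ _ => ⟨Int.even_add_one, by simp only [Int.even_add_one, not_not]⟩) v

theorem quot_mk_cross {δ : ℝ} (hδ : |δ| ≤ 1 / 8) (v : Word × ℤ) :
    Quot.mk Glued ((cross v).1, (δ + (cross v).2 / 2, 1)) =
      Quot.mk Glued (v.1, (δ + v.2 / 2, 1)) := by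
  refine cross_cases (P := fun v w => Quot.mk Glued (w.1, (δ + (w.2 : ℝ) / 2, 1)) =
      Quot.mk Glued (v.1, (δ + (v.2 : ℝ) / 2, 1))) (fun n l h => ?_) v
  have hgate : Gate n (δ + n / 2) := by rwa [Gate, add_sub_cancel_right]
  have hsound := Quot.sound (Glued.gate h hgate)
  have hθ : δ + ((n + 1 : ℤ) : ℝ) / 2 = δ + n / 2 + 1 / 2 := by push_cast; ring
  simp only [hθ]
  exact ⟨hsound.symm, hsound⟩

theorem isClosed_range_intCast_add (c : ℝ) : IsClosed {x : ℝ | ∃ n : ℤ, x = c + n} := by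
  have h : {x : ℝ | ∃ n : ℤ, x = c + n} = (· - c) ⁻¹' range ((↑) : ℤ → ℝ) := by
    ext x
    simp [eq_comm, sub_eq_iff_eq_add']
  rw [h]
  exact Int.isClosedEmbedding_coe_real.isClosed_range.preimage (by fun_prop)

theorem continuousAt_floor {x : ℝ} (hx : ∀ n : ℤ, x ≠ n) : ContinuousAt (Int.floor : ℝ → ℤ) x := by
  refine (continuousAt_const (y := ⌊x⌋)).congr (Filter.eventuallyEq_of_mem
    (Ioo_mem_nhds ((Int.floor_le x).lt_of_ne' (hx _)) (Int.lt_floor_add_one x)) fun y hy => ?_)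
  exact (Int.floor_eq_iff.2 ⟨hy.1.le, hy.2⟩).symm

/-- Strip points off the gates and off the cuts at the angles `2π(c + n)`. -/
def offGates (c : ℝ) : Set Strip :=
  {z | ¬(z.2 = 1 ∧ ∃ m, Gate m z.1) ∧ ∀ n : ℤ, z.1 ≠ c + n}

theorem isOpen_offGates (c : ℝ) : IsOpen (offGates c) := by
  have hgate : IsClosed {z : Strip | z.2 = 1 ∧ ∃ m, Gate m z.1} := by
    simp only [← cos_four_pi_nonneg_iff]
    have hcos : Continuous fun z : Strip => Real.cos (4 * Real.pi * z.1) := by fun_prop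
    exact (isClosed_eq continuous_snd continuous_const).inter
      (isClosed_le continuous_const hcos)
  have hcut := (isClosed_range_intCast_add c).preimage (continuous_fst (X := ℝ) (Y := I))
  convert hgate.isOpen_compl.inter hcut.isOpen_compl using 1
  ext z
  simp [offGates]

theorem exists_int_of_polar_eq_of_mem_offGates {c : ℝ} {z z' : Strip} (h : polar z = polar z')
    (hz : z ∈ offGates c) : ∃ n : ℤ, z' = (z.1 + n, z.2) := by
  rcases polar_eq_polar_iff.1 h with ⟨hr, n, hn⟩ | ⟨hr, -, hgate, -⟩
  · exact ⟨n, Prod.ext hn hr.symm⟩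
  · exact absurd ⟨hr, hgate⟩ hz.1

theorem mem_offGates_of_polar_eq {c : ℝ} {z z' : Strip} (h : polar z = polar z')
    (hz : z ∈ offGates c) : z' ∈ offGates c := by
  obtain ⟨n, rfl⟩ := exists_int_of_polar_eq_of_mem_offGates h hz
  refine ⟨fun ⟨hr, hgate⟩ => hz.1 ⟨hr, ?_⟩, fun k hk => hz.2 (k - n) ?_⟩
  · obtain ⟨m, hm⟩ := hgate
    refine ⟨m - 2 * n, ?_⟩
    unfold Gate at hm ⊢
    convert hm using 2
    push_cast
    ring
  · push_cast
    linear_combination hk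

theorem isEvenlyCovered_of_mem_offGates {c : ℝ} {z : Strip} (hz : z ∈ offGates c) :
    IsEvenlyCovered Tree.proj (polar z) (Word × ℤ) := by
  have hfloor : ContinuousOn (fun z : Strip => ⌊z.1 - c⌋) (offGates c) := fun z hz =>
    (ContinuousAt.comp (f := fun z : Strip => z.1 - c)
      (continuousAt_floor fun n hn => hz.2 n (by linear_combination hn))
      (by fun_prop)).continuousWithinAt
  refine isEvenlyCovered_quot (π := Prod.snd) (V := offGates c)
    (sheet := fun d => (d.1, ⌊d.2.1 - c⌋))
    (sec := fun v z => (v.1, (z.1 - ⌊z.1 - c⌋ + v.2, z.2)))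
    Tree.continuous_proj isQuotientMap_polar (fun _ => rfl) (isOpen_offGates c)
    (fun _ _ => mem_offGates_of_polar_eq) ?_ ?_ ?_ ?_ ?_ ?_ hz
  · exact continuousOn_fst.prodMk (hfloor.comp continuousOn_snd fun _ h => h)
  · rintro _ _ ⟨h, hθ⟩ hd
    exact absurd ⟨rfl, _, hθ⟩ hd.1
  · intro v
    have hcast : ContinuousOn (fun z : Strip => (⌊z.1 - c⌋ : ℝ)) (offGates c) :=
      continuous_of_discreteTopology.comp_continuousOn hfloor
    fun_prop
  · rintro v z -
    simpa [sub_add_eq_add_sub, add_sub_assoc] using polar_add_int z.1 z.2 (v.2 - ⌊z.1 - c⌋)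
  · rintro v z -
    have hcut : z.1 - ⌊z.1 - c⌋ + v.2 - c = z.1 - c - ⌊z.1 - c⌋ + v.2 := by ring
    refine Prod.ext rfl ?_
    rw [hcut, Int.floor_add_intCast, Int.floor_sub_intCast, sub_self, zero_add]
  · rintro ⟨l, z'⟩ z hz h
    obtain ⟨n, rfl⟩ := exists_int_of_polar_eq_of_mem_offGates h hz
    simp only [add_sub_right_comm, Int.floor_add_intCast, Int.cast_add, ← add_assoc,
      sub_add_cancel]

/-- Strip points off the cuts half-way between consecutive gates. -/
def offMidpoints : Set Strip := {z | ∀ n : ℤ, 2 * z.1 + 1 / 2 ≠ n}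

/-- The number of the gate nearest to a point of the strip. -/
noncomputable def nearestGate (z : Strip) : ℤ := ⌊2 * z.1 + 1 / 2⌋

theorem nearestGate_eq {m : ℤ} {z : Strip} (h : Gate m z.1) : nearestGate z = m := by
  rw [Gate, abs_le] at h
  exact Int.floor_eq_iff.2 ⟨by linarith, by linarith⟩

theorem nearestGate_add (θ : ℝ) (r : I) (n : ℤ) :
    nearestGate (θ + n / 2, r) = nearestGate (θ, r) + n := by
  have h : 2 * (θ + n / 2) + 1 / 2 = 2 * θ + 1 / 2 + n := by ring
  rw [nearestGate, h, Int.floor_add_intCast]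
  rfl

/-- A passage between two strips has two ends, carrying numbers of opposite parity. -/
def evenEnd (v : Word × ℤ) : {v : Word × ℤ // Even v.2} :=
  if h : Even v.2 then ⟨v, h⟩ else ⟨cross v, (even_cross_snd v).2 h⟩

theorem evenEnd_cross (v : Word × ℤ) : evenEnd (cross v) = evenEnd v := by
  by_cases h : Even v.2 <;> simp [evenEnd, even_cross_snd, h, cross_cross]

/-- The end whose number has the parity of `m`, of a passage given by its even end. -/
def endOfParity (v : {v : Word × ℤ // Even v.2}) (m : ℤ) : Word × ℤ :=
  if Even m then v else cross v

theorem evenEnd_endOfParity (v : {v : Word × ℤ // Even v.2}) (m : ℤ) :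
    evenEnd (endOfParity v m) = v := by
  have hv : evenEnd v = v := dif_pos v.2
  unfold endOfParity
  split_ifs
  exacts [hv, (evenEnd_cross _).trans hv]

theorem even_endOfParity_sub (v : {v : Word × ℤ // Even v.2}) (m : ℤ) :
    Even ((endOfParity v m).2 - m) := by
  rw [Int.even_sub, endOfParity]
  split_ifs with h
  · exact iff_of_true v.2 h
  · exact iff_of_false (by simpa [even_cross_snd] using v.2) h

theorem endOfParity_evenEnd {v : Word × ℤ} {m : ℤ} (h : Even v.2 ↔ Even m) :
    endOfParity (evenEnd v) m = v := by
  by_cases hm : Even m <;> simp [endOfParity, evenEnd, h, hm, cross_cross]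

theorem endOfParity_evenEnd_of_not {v : Word × ℤ} {m : ℤ} (h : ¬(Even v.2 ↔ Even m)) :
    endOfParity (evenEnd v) m = cross v := by
  rw [← evenEnd_cross, endOfParity_evenEnd]
  rw [even_cross_snd]
  tauto

theorem exists_add_half_of_polar_eq {z z' : Strip} (h : polar z = polar z') :
    ∃ n : ℤ, z' = (z.1 + n / 2, z.2) := by
  rcases polar_eq_polar_iff.1 h with ⟨hr, n, hn⟩ | ⟨hr, hr', -, n, hn⟩
  · exact ⟨2 * n, Prod.ext (by push_cast; linear_combination hn) hr.symm⟩
  · exact ⟨2 * n + 1, Prod.ext (by push_cast; linear_combination hn) (hr'.trans hr.symm)⟩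

theorem isOpen_offMidpoints : IsOpen offMidpoints := by
  have h := Int.isClosedEmbedding_coe_real.isClosed_range.preimage
    (by fun_prop : Continuous fun z : Strip => 2 * z.1 + 1 / 2)
  convert h.isOpen_compl using 1
  ext z
  simp [offMidpoints, eq_comm]

theorem mem_offMidpoints_of_polar_eq {z z' : Strip} (h : polar z = polar z')
    (hz : z ∈ offMidpoints) : z' ∈ offMidpoints := by
  obtain ⟨n, rfl⟩ := exists_add_half_of_polar_eq h
  refine fun k hk => hz (k - n) ?_
  push_cast
  linear_combination hk

theorem mem_offMidpoints_of_gate {m : ℤ} {z : Strip} (h : Gate m z.1) : z ∈ offMidpoints := by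
  rw [Gate, abs_le] at h
  intro n hn
  have hlt : (m : ℝ) < n := by linarith
  have hgt : (n : ℝ) < m + 1 := by linarith
  norm_cast at hlt hgt
  lia

theorem quot_mk_endOfParity {l : Word} {z z' : Strip} (h : polar z = polar z') :
    Quot.mk Glued ((endOfParity (evenEnd (l, nearestGate z')) (nearestGate z)).1,
      (z.1 - nearestGate z / 2 +
        (endOfParity (evenEnd (l, nearestGate z')) (nearestGate z)).2 / 2, z.2)) =
      Quot.mk Glued (l, z') := by
  obtain ⟨θ, r⟩ := z
  rcases polar_eq_polar_iff.1 h with ⟨hr, n, hn⟩ | ⟨hr, hr', ⟨m, hm⟩, n, hn⟩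
  · obtain rfl : z' = (θ + (2 * n : ℤ) / 2, r) :=
      Prod.ext (hn.trans (by push_cast; ring)) hr.symm
    rw [nearestGate_add, endOfParity_evenEnd (by simp [Int.even_add])]
    push_cast
    ring_nf
  · obtain rfl : z' = (θ + (2 * n + 1 : ℤ) / 2, 1) :=
      Prod.ext (hn.trans (by push_cast; ring)) hr'
    obtain rfl : r = 1 := hr
    have hδ : |θ - (nearestGate (θ, 1) : ℝ) / 2| ≤ 1 / 8 := by
      rw [nearestGate_eq (z := (θ, 1)) hm]
      exact hm
    rw [nearestGate_add, endOfParity_evenEnd_of_not (by grind),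
      quot_mk_cross hδ]
    push_cast
    ring_nf

theorem isEvenlyCovered_of_mem_offMidpoints {z : Strip} (hz : z ∈ offMidpoints) :
    IsEvenlyCovered Tree.proj (polar z) {v : Word × ℤ // Even v.2} := by
  have hgate : ContinuousOn nearestGate offMidpoints := fun z hz =>
    (ContinuousAt.comp (f := fun z : Strip => 2 * z.1 + 1 / 2)
      (continuousAt_floor hz) (by fun_prop)).continuousWithinAt
  refine isEvenlyCovered_quot (π := Prod.snd) (V := offMidpoints)
    (sheet := fun d => evenEnd (d.1, nearestGate d.2))
    (sec := fun v z => ((endOfParity v (nearestGate z)).1,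
      (z.1 - nearestGate z / 2 + (endOfParity v (nearestGate z)).2 / 2, z.2)))
    Tree.continuous_proj isQuotientMap_polar (fun _ => rfl) isOpen_offMidpoints
    (fun _ _ => mem_offMidpoints_of_polar_eq) ?_ ?_ ?_ ?_ ?_
    (fun _ _ _ => quot_mk_endOfParity) hz
  · exact (continuous_of_discreteTopology (f := evenEnd)).comp_continuousOn
      (continuousOn_fst.prodMk (hgate.comp continuousOn_snd fun _ h => h))
  · rintro _ _ (@⟨n, _, h, θ, hθ⟩) -
    have hm : nearestGate (θ, 1) = n := nearestGate_eq hθ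
    have hm' : nearestGate (θ + 1 / 2, 1) = n + 1 := by
      simpa only [Int.cast_one, hm] using nearestGate_add θ 1 1
    simp only [hm, hm']
    rw [← evenEnd_cross, cross_of_isChain h]
  · intro v
    have hend : ContinuousOn (fun z => endOfParity v (nearestGate z)) offMidpoints :=
      (continuous_of_discreteTopology (f := endOfParity v)).comp_continuousOn hgate
    have hcast : ContinuousOn (fun z => (nearestGate z : ℝ)) offMidpoints :=
      (continuous_of_discreteTopology (f := ((↑) : ℤ → ℝ))).comp_continuousOn hgate
    have hcast' : ContinuousOn (fun z => ((endOfParity v (nearestGate z)).2 : ℝ)) offMidpoints :=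
      (continuous_of_discreteTopology (f := ((↑) : ℤ → ℝ))).comp_continuousOn hend.snd
    exact hend.fst.prodMk (ContinuousOn.prodMk (by fun_prop) continuousOn_snd)
  · rintro v z -
    obtain ⟨k, hk⟩ := even_endOfParity_sub v (nearestGate z)
    rw [← polar_add_int z.1 z.2 k, ← sub_add_cancel (endOfParity v (nearestGate z)).2, hk]
    push_cast
    ring_nf
  · rintro v z -
    have hm : nearestGate (z.1 - nearestGate z / 2, z.2) = 0 := by
      simpa [sub_eq_add_neg, neg_div] using nearestGate_add z.1 z.2 (-nearestGate z)
    rw [nearestGate_add, hm, zero_add]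
    exact evenEnd_endOfParity v _

theorem Tree.isCoveringMap_proj : IsCoveringMap Tree.proj := by
  intro x
  obtain ⟨z, rfl⟩ := polar_surjective x
  by_cases hz : z.2 = 1 ∧ ∃ m, Gate m z.1
  · obtain ⟨-, m, hm⟩ := hz
    exact (isEvenlyCovered_of_mem_offMidpoints
      (mem_offMidpoints_of_gate hm)).to_isEvenlyCovered_preimage
  · refine (isEvenlyCovered_of_mem_offGates (c := z.1 + 1 / 2)
      ⟨hz, fun n hn => ?_⟩).to_isEvenlyCovered_preimage
    have h : ((2 * n + 1 : ℤ) : ℝ) = 0 := by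
      push_cast
      linear_combination -2 * hn
    norm_cast at h
    lia

theorem eq_of_quot_mk_glued_eq {d d' : Word × Strip} (h : Quot.mk Glued d = Quot.mk Glued d')
    (hd : d.2.2 ≠ 1) : d' = d := by
  refine eq_of_quot_mk_eq_of_mem (W := {d : Word × Strip | d.2.2 ≠ 1}) (s := id) ?_ ?_ h hd
  · rintro _ _ ⟨h, hθ⟩
    exact Iff.rfl
  · rintro _ _ ⟨h, hθ⟩ hr
    exact absurd rfl hr

/-- The word of the image of a strip under the deck transformation `Tree.shift d`. -/
def Word.shift (d : ℤ) (w : Word) : Word :=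
  ⟨w.1.map (· + 2 * d), (List.isChain_map _).2 (w.2.imp fun a b h => by lia)⟩

/-- The word of the root strip. -/
def Word.nil : Word := ⟨[], .nil⟩

theorem Word.eq_nil_of_shift_eq {d : ℤ} (hd : d ≠ 0) {w : Word} (h : w.shift d = w) : w = nil := by
  obtain ⟨l, hl⟩ := w
  cases l with
  | nil => rfl
  | cons n l =>
    have hn : n + 2 * d = n := (List.cons.inj (congrArg Subtype.val h)).1
    lia

/-- The deck transformation of the tree of strips that turns the root strip `d` times around. -/
def Tree.shift (d : ℤ) : Tree → Tree :=
  Quot.map (fun e => (e.1.shift d, (e.2.1 + d, e.2.2))) <| by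
    rintro _ _ (@⟨n, l, h, θ, hθ⟩)
    have hgate : Gate (n + 2 * d) (θ + d) := by
      unfold Gate at hθ ⊢
      convert hθ using 2
      push_cast
      ring
    have hglue := Glued.gate (Word.shift d ⟨n :: l, h⟩).2 hgate
    rwa [add_right_comm] at hglue

theorem Tree.continuous_shift (d : ℤ) : Continuous (Tree.shift d) := by
  refine continuous_quot_lift _ (continuous_quot_mk.comp ?_)
  have hword : Continuous (Word.shift d) := continuous_of_discreteTopology
  exact (hword.comp continuous_fst).prodMk (by fun_prop)

theorem Tree.proj_shift (d : ℤ) (e : Tree) : Tree.proj (e.shift d) = Tree.proj e := by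
  obtain ⟨⟨w, θ, r⟩, rfl⟩ := Quot.exists_rep e
  exact polar_add_int θ r d

/-! ### Retracting the tree along its gates -/

/-- The path along which a point of a strip `n :: l` leaves for the parent strip `l`, in the time
`s` remaining until it reaches the gate `n + 1`. -/
noncomputable def pull (n : ℤ) (s : ℝ) (z : Strip) : Strip :=
  (max ((n + 1) / 2 - 1 / 8 - s) (min ((n + 1) / 2 + 1 / 8 + s) z.1),
    projIcc 0 1 zero_le_one (max z.2 (1 - s)))

/-- The point of the gate `n` of the strip `l` through which the strip `n :: l` is left. -/
noncomputable def exitPoint (n : ℤ) (z : Strip) : Strip := ((pull n 0 z).1 - 1 / 2, 1)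

/-- The time needed to reach the gate `n + 1` along `pull n`. -/
noncomputable def gateTime (n : ℤ) (z : Strip) : ℝ :=
  max |(pull n 0 z).1 - z.1| (1 - z.2)

theorem continuous_pull (n : ℤ) : Continuous fun p : ℝ × Strip => pull n p.1 p.2 :=
  Continuous.prodMk (by fun_prop) (continuous_projIcc.comp (by fun_prop))

theorem continuous_exitPoint (n : ℤ) : Continuous (exitPoint n) := by
  have hpull : Continuous fun z => pull n 0 z :=
    (continuous_pull n).comp (continuous_const.prodMk continuous_id)
  exact (hpull.fst.sub continuous_const).prodMk continuous_const

theorem continuous_gateTime (n : ℤ) : Continuous (gateTime n) := by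
  have hpull : Continuous fun z => pull n 0 z :=
    (continuous_pull n).comp (continuous_const.prodMk continuous_id)
  exact ((hpull.fst.sub continuous_fst).abs).max (by fun_prop)

theorem gateTime_nonneg (n : ℤ) (z : Strip) : 0 ≤ gateTime n z :=
  (abs_nonneg _).trans (le_max_left _ _)

theorem pull_zero (n : ℤ) (z : Strip) : pull n 0 z = ((exitPoint n z).1 + 1 / 2, 1) := by
  refine Prod.ext (sub_add_cancel _ _).symm ?_
  simp [pull]

theorem pull_of_gateTime_le {n : ℤ} {s : ℝ} {z : Strip} (h : gateTime n z ≤ s) :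
    pull n s z = z := by
  have hθ := abs_le.1 ((le_max_left _ _).trans h)
  have hr := (le_max_right _ _).trans h
  refine Prod.ext ?_ ?_
  · simp only [pull] at hθ ⊢
    grind
  · simp [pull, max_eq_left (by linarith : 1 - s ≤ z.2)]

theorem gate_exitPoint (n : ℤ) (z : Strip) : Gate n (exitPoint n z).1 := by
  simp only [Gate, exitPoint, pull, abs_le]
  grind

theorem exitPoint_add_half {n : ℤ} {θ : ℝ} (hθ : Gate n θ) :
    exitPoint n (θ + 1 / 2, 1) = (θ, 1) := by
  rw [Gate, abs_le] at hθ
  refine Prod.ext ?_ rfl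
  simp only [exitPoint, pull]
  grind

theorem gateTime_add_half {n : ℤ} {θ : ℝ} (hθ : Gate n θ) : gateTime n (θ + 1 / 2, 1) = 0 := by
  rw [gateTime, pull_zero, exitPoint_add_half hθ]
  simp

theorem pull_shift (n d : ℤ) (s θ : ℝ) (r : I) :
    pull (n + 2 * d) s (θ + d, r) = ((pull n s (θ, r)).1 + d, (pull n s (θ, r)).2) := by
  refine Prod.ext ?_ rfl
  simp only [pull]
  push_cast
  grind

theorem exitPoint_shift (n d : ℤ) (θ : ℝ) (r : I) :
    exitPoint (n + 2 * d) (θ + d, r) = ((exitPoint n (θ, r)).1 + d, (exitPoint n (θ, r)).2) := by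
  rw [exitPoint, pull_shift, exitPoint, add_sub_right_comm]

theorem gateTime_shift (n d : ℤ) (θ : ℝ) (r : I) :
    gateTime (n + 2 * d) (θ + d, r) = gateTime n (θ, r) := by
  rw [gateTime, gateTime, pull_shift, add_sub_add_right_eq_sub]

/-- The time needed to reach `C₂` in the root strip. -/
noncomputable def Strip.rootTime : List ℤ → Strip → ℝ
  | [], z => z.2
  | n :: l, z => gateTime n z + rootTime l (exitPoint n z)

/-- Where the point `z` of the strip `l` is on its way to `C₂` in the root strip, seen in `X`, when
the time `s` remains. The way starts at the time `s = rootTime l z`. -/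
noncomputable def Strip.descend : List ℤ → ℝ → Strip → X
  | [], s, z => polar (z.1, projIcc 0 1 zero_le_one (min z.2 s))
  | n :: l, s, z =>
    if rootTime l (exitPoint n z) ≤ s then polar (pull n (s - rootTime l (exitPoint n z)) z)
    else descend l s (exitPoint n z)

theorem Strip.continuous_rootTime (l : List ℤ) : Continuous (rootTime l) := by
  induction l with
  | nil => exact continuous_subtype_val.comp continuous_snd
  | cons n l ih => exact (continuous_gateTime n).add (ih.comp (continuous_exitPoint n))

theorem Strip.rootTime_pos (l : List ℤ) (θ : ℝ) : 0 < rootTime l (θ, 1) := by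
  induction l generalizing θ with
  | nil => exact one_pos
  | cons n l ih => exact add_pos_of_nonneg_of_pos (gateTime_nonneg n _) (ih _)

theorem Strip.descend_of_rootTime_le {l : List ℤ} {s : ℝ} {z : Strip} (h : rootTime l z ≤ s) :
    descend l s z = polar z := by
  cases l with
  | nil =>
    simp only [rootTime] at h
    simp [descend, min_eq_left h]
  | cons n l =>
    simp only [rootTime] at h
    rw [descend, if_pos (by linarith [gateTime_nonneg n z]), pull_of_gateTime_le (by linarith)]

theorem Strip.continuous_descend (l : List ℤ) :
    Continuous fun p : ℝ × Strip => descend l p.1 p.2 := by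
  induction l with
  | nil =>
    exact continuous_polar.comp (Continuous.prodMk (by fun_prop)
      (continuous_projIcc.comp (by fun_prop)))
  | cons n l ih =>
    have hexit : Continuous fun p : ℝ × Strip => exitPoint n p.2 :=
      (continuous_exitPoint n).comp continuous_snd
    have htime : Continuous fun p : ℝ × Strip => rootTime l (exitPoint n p.2) :=
      (continuous_rootTime l).comp hexit
    refine Continuous.if_le ?_ (ih.comp (continuous_fst.prodMk hexit)) htime continuous_fst ?_
    · exact continuous_polar.comp
        ((continuous_pull n).comp ((continuous_fst.sub htime).prodMk continuous_snd))
    · intro p hs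
      rw [← hs, sub_self, pull_zero, polar_add_half (gate_exitPoint n p.2),
        descend_of_rootTime_le le_rfl]
      rfl

theorem Strip.descend_zero_mem_C2 (l : List ℤ) (z : Strip) : descend l 0 z ∈ C2 := by
  induction l generalizing z with
  | nil =>
    refine polar_mem_C2_iff.2 ?_
    simp [min_eq_right z.2.2.1]
  | cons n l ih =>
    have hpos : 0 < rootTime l (exitPoint n z) := rootTime_pos l _
    rw [descend, if_neg hpos.not_ge]
    exact ih _

theorem Strip.descend_nil_of_snd_eq_zero (s θ : ℝ) : descend [] s (θ, 0) = polar (θ, 0) := by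
  have h : projIcc (0 : ℝ) 1 zero_le_one (min 0 s) = 0 := projIcc_of_le_left _ (min_le_left _ _)
  rw [descend, Icc.coe_zero, h]

theorem Strip.rootTime_cons_add_half {n : ℤ} {θ : ℝ} (hθ : Gate n θ) (l : List ℤ) :
    rootTime (n :: l) (θ + 1 / 2, 1) = rootTime l (θ, 1) := by
  rw [rootTime, gateTime_add_half hθ, exitPoint_add_half hθ, zero_add]

theorem Strip.descend_cons_add_half {n : ℤ} {θ : ℝ} (hθ : Gate n θ) (l : List ℤ) (s : ℝ) :
    descend (n :: l) s (θ + 1 / 2, 1) = descend l s (θ, 1) := by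
  rw [descend, exitPoint_add_half hθ]
  split_ifs with hs
  · rw [pull_of_gateTime_le (by rw [gateTime_add_half hθ]; exact sub_nonneg.2 hs),
      polar_add_half hθ, descend_of_rootTime_le hs]
  · rfl

theorem Strip.rootTime_shift (l : List ℤ) (d : ℤ) (θ : ℝ) (r : I) :
    rootTime (l.map (· + 2 * d)) (θ + d, r) = rootTime l (θ, r) := by
  induction l generalizing θ r with
  | nil => rfl
  | cons n l ih => rw [List.map_cons, rootTime, gateTime_shift, exitPoint_shift, ih, rootTime]

theorem Strip.descend_shift (l : List ℤ) (d : ℤ) (s θ : ℝ) (r : I) :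
    descend (l.map (· + 2 * d)) s (θ + d, r) = descend l s (θ, r) := by
  induction l generalizing θ r with
  | nil => exact polar_add_int _ _ _
  | cons n l ih =>
    simp only [List.map_cons, descend, exitPoint_shift, rootTime_shift, pull_shift, ih,
      polar_add_int]

/-- The function on the tree of strips induced by `rootTime`. -/
noncomputable def Tree.rootTime : Tree → ℝ :=
  Quot.lift (fun e => Strip.rootTime e.1.1 e.2) <| by
    rintro _ _ ⟨h, hθ⟩
    exact (Strip.rootTime_cons_add_half hθ _).symm

/-- The map out of the tree of strips induced by `descend`. -/
noncomputable def Tree.descend (s : ℝ) : Tree → X :=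
  Quot.lift (fun e => Strip.descend e.1.1 s e.2) <| by
    rintro _ _ ⟨h, hθ⟩
    exact (Strip.descend_cons_add_half hθ _ s).symm

theorem Tree.continuous_rootTime : Continuous Tree.rootTime :=
  continuous_quot_lift _ (continuous_prod_of_discrete_left.2 fun w => Strip.continuous_rootTime w.1)

theorem Tree.continuous_descend : Continuous fun p : ℝ × Tree => Tree.descend p.1 p.2 := by
  refine (isQuotientMap_quot_mk (r := Glued)).continuous_lift_prod_right ?_
  have hswap : Continuous fun p : Word × ℝ × Strip => Strip.descend p.1.1 p.2.1 p.2.2 :=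
    continuous_prod_of_discrete_left.2 fun w => Strip.continuous_descend w.1
  exact hswap.comp (f := fun p : ℝ × Word × Strip => (p.2.1, p.1, p.2.2)) (by fun_prop)

theorem Tree.descend_rootTime (e : Tree) : Tree.descend e.rootTime e = Tree.proj e := by
  obtain ⟨e, rfl⟩ := Quot.exists_rep e
  exact Strip.descend_of_rootTime_le le_rfl

theorem Tree.descend_zero_mem_C2 (e : Tree) : Tree.descend 0 e ∈ C2 := by
  obtain ⟨e, rfl⟩ := Quot.exists_rep e
  exact Strip.descend_zero_mem_C2 _ _

theorem Tree.rootTime_shift (d : ℤ) (e : Tree) : (e.shift d).rootTime = e.rootTime := by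
  obtain ⟨⟨w, θ, r⟩, rfl⟩ := Quot.exists_rep e
  exact Strip.rootTime_shift w.1 d θ r

theorem Tree.descend_shift (d : ℤ) (s : ℝ) (e : Tree) :
    Tree.descend s (e.shift d) = Tree.descend s e := by
  obtain ⟨⟨w, θ, r⟩, rfl⟩ := Quot.exists_rep e
  exact Strip.descend_shift w.1 d s θ r

/-! ### Circle maps -/

theorem unitAddCircle_coe_eq_coe_iff {s s' : ℝ} :
    (s : UnitAddCircle) = s' ↔ ∃ n : ℤ, s' = s + n := by
  rw [eq_comm, ← sub_eq_zero, ← AddCircle.coe_sub, AddCircle.coe_eq_zero_iff]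
  simp only [zsmul_eq_mul, mul_one, eq_comm (b := s' - s), sub_eq_iff_eq_add']

section CircleMaps

variable {C : Type*} [TopologicalSpace C] {q : C(ℝ, C)}

theorem exists_lift_of_isQuotientMap (hq : IsQuotientMap q)
    (hfib : ∀ s s', q s = q s' ↔ ∃ n : ℤ, s' = s + n) (g : C(C, C)) :
    ∃ A : C(ℝ, ℝ), (∀ s, q (A s) = g (q s)) ∧ ∃ d : ℤ, ∀ s, A (s + 1) = A s + d := by
  have hcov : IsCoveringMap ((↑) : ℝ → UnitAddCircle) := AddCircle.isCoveringMap_coe 1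
  let coe : C(ℝ, UnitAddCircle) := ⟨(↑), hcov.continuous⟩
  have hfactor : Function.FactorsThrough coe q := fun s s' h =>
    unitAddCircle_coe_eq_coe_iff.2 ((hfib s s').1 h)
  obtain ⟨toCircle, htoCircle⟩ : ∃ toCircle : C(C, UnitAddCircle), ∀ s, toCircle (q s) = s :=
    ⟨hq.lift coe hfactor, DFunLike.congr_fun (hq.lift_comp coe hfactor)⟩
  obtain ⟨a, ha⟩ := hq.surjective (g (q 0))
  obtain ⟨A, ⟨-, hA⟩, -⟩ := hcov.existsUnique_continuousMap_lifts
    ((toCircle.comp g).comp q) 0 a ((htoCircle a).symm.trans (congrArg _ ha))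
  have hqA (s : ℝ) : q (A s) = g (q s) := by
    obtain ⟨s', hs'⟩ := hq.surjective (g (q s))
    have h : (A s : UnitAddCircle) = s' :=
      (congrFun hA s).trans ((congrArg toCircle hs'.symm).trans (htoCircle s'))
    rw [← hs', hfib]
    exact unitAddCircle_coe_eq_coe_iff.1 h
  have hq1 (s : ℝ) : q s = q (s + 1) := (hfib _ _).2 ⟨1, by simp⟩
  have hA1 (s : ℝ) : ∃ d : ℤ, A (s + 1) = A s + d := by rw [← hfib, hqA, hqA, hq1]
  obtain ⟨d, hd⟩ := hA1 0
  refine ⟨A, hqA, d, fun s => congrFun (hcov.eq_of_comp_eq (g₁ := fun s => A (s + 1))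
    (g₂ := fun s => A s + d) (by fun_prop) (by fun_prop) (funext fun s => ?_) 0 hd) s⟩
  obtain ⟨d', hd'⟩ := hA1 s
  exact unitAddCircle_coe_eq_coe_iff.2 ⟨d - d', by push_cast; linear_combination -hd'⟩

theorem nullhomotopic_of_periodic_lift (hq : IsQuotientMap q)
    (hfib : ∀ s s', q s = q s' → ∃ n : ℤ, s' = s + n) {g : C(C, C)} {A : C(ℝ, ℝ)}
    (hA : ∀ s, q (A s) = g (q s)) (hper : Function.Periodic A 1) : g.Nullhomotopic := by
  have hfactor : Function.FactorsThrough A q := fun s s' h => by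
    obtain ⟨n, rfl⟩ := hfib s s' h
    simpa only [mul_one] using (hper.int_mul n s).symm
  obtain ⟨A', hA'⟩ : ∃ A' : C(C, ℝ), ∀ s, A' (q s) = A s :=
    ⟨hq.lift A hfactor, DFunLike.congr_fun (hq.lift_comp A hfactor)⟩
  have hg : g = q.comp ((ContinuousMap.id ℝ).comp A') := by
    ext c
    obtain ⟨s, rfl⟩ := hq.surjective c
    exact (hA s).symm.trans (congrArg q (hA' s).symm)
  rw [hg]
  exact ((id_nullhomotopic ℝ).comp_left A').comp_right _

end CircleMaps

/-- The parametrization of `C₂` by the polar angle. -/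
noncomputable def polarC2 : C(ℝ, C2) :=
  ⟨fun θ => ⟨polar (θ, 0), polar_mem_C2_iff.2 rfl⟩,
    (continuous_polar.comp (by fun_prop)).subtype_mk _⟩

theorem polarC2_eq_polarC2_iff {θ θ' : ℝ} :
    polarC2 θ = polarC2 θ' ↔ ∃ n : ℤ, θ' = θ + n := by
  simp [polarC2, polar_eq_polar_iff]

theorem isQuotientMap_polarC2 : IsQuotientMap polarC2 := by
  have hC2 : IsClosed C2 := by
    rw [← isQuotientMap_polar.isClosed_preimage]
    have h : polar ⁻¹' C2 = {z | z.2 = 0} := by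
      ext z
      exact polar_mem_C2_iff
    rw [h]
    exact isClosed_eq continuous_snd continuous_const
  have hpolar := isQuotientMap_restrictPreimage isQuotientMap_polar hC2
  let toStrip : ℝ → polar ⁻¹' C2 := fun θ => ⟨(θ, 0), polar_mem_C2_iff.2 rfl⟩
  have htoStrip : IsQuotientMap toStrip :=
    .of_inverse (f := fun z : polar ⁻¹' C2 => z.1.1) (by fun_prop) (by fun_prop) fun z =>
      Subtype.ext (Prod.ext rfl (polar_mem_C2_iff.1 z.2).symm)
  exact hpolar.comp htoStrip

theorem exists_lift_of_essential {f : C(X, X)} {h : MapsTo f C2 C2}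
    (hess : Essential (restrictMap f h)) :
    ∃ A : C(ℝ, ℝ), (∀ s, polar (A s, 0) = f (polar (s, 0))) ∧
      ∃ d : ℤ, d ≠ 0 ∧ ∀ s, A (s + 1) = A s + d := by
  have hfib (s s' : ℝ) := polarC2_eq_polarC2_iff (θ := s) (θ' := s')
  obtain ⟨A, hA, d, hd⟩ := exists_lift_of_isQuotientMap isQuotientMap_polarC2 hfib (restrictMap f h)
  refine ⟨A, fun s => congrArg Subtype.val (hA s), d, ?_, hd⟩
  rintro rfl
  refine hess (nullhomotopic_of_periodic_lift isQuotientMap_polarC2 (fun s s' => (hfib s s').1) hA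
    fun s => ?_)
  simpa using hd s

/-! ### Compression into `C₂` -/

/-- The point with angle `2πθ` of the line over `C₂` in the strip `w`. -/
def Tree.line (w : Word) (θ : ℝ) : Tree := Quot.mk Glued (w, (θ, 0))

theorem Tree.continuous_line (w : Word) : Continuous (Tree.line w) :=
  continuous_quot_mk.comp (by fun_prop)

theorem Tree.line_injective_left {w w' : Word} {θ θ' : ℝ} (h : Tree.line w θ = Tree.line w' θ') :
    w = w' := (congrArg Prod.fst (eq_of_quot_mk_glued_eq h zero_ne_one)).symm

theorem Tree.exists_line_eq {e : Tree} {θ : ℝ} (h : e.proj = polar (θ, 0)) :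
    ∃ (w : Word) (k : ℤ), e = Tree.line w (θ + k) := by
  obtain ⟨⟨w, θ', r⟩, rfl⟩ := Quot.exists_rep e
  change polar (θ', r) = polar (θ, 0) at h
  obtain rfl : r = 0 := polar_mem_C2_iff.1 (by rw [h]; exact polar_mem_C2_iff.2 rfl)
  obtain ⟨k, rfl⟩ : ∃ k : ℤ, θ' = θ + k := by simpa [polar_eq_polar_iff] using h.symm
  exact ⟨w, k, rfl⟩

theorem Tree.exists_lift (g : C(Strip, X)) {z₀ : Strip} {e₀ : Tree} (h : e₀.proj = g z₀) :
    ∃ G : C(Strip, Tree), G z₀ = e₀ ∧ ∀ z, (G z).proj = g z := by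
  let extend : C(ℝ × ℝ, Strip) :=
    ⟨Prod.map id (projIcc 0 1 zero_le_one), continuous_id.prodMap continuous_projIcc⟩
  have hextend (z : Strip) : extend (z.1, z.2) = z := Prod.ext rfl (projIcc_val zero_le_one z.2)
  obtain ⟨G, ⟨hG₀, hG⟩, -⟩ := Tree.isCoveringMap_proj.existsUnique_continuousMap_lifts
    (g.comp extend) (z₀.1, z₀.2) e₀ (h.trans (congrArg g (hextend z₀)).symm)
  exact ⟨G.comp ⟨fun z => (z.1, z.2), by fun_prop⟩, hG₀, fun z =>
    (congrFun hG _).trans (congrArg g (hextend z))⟩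

theorem Tree.lift_unique {T : Type*} [TopologicalSpace T] [PreconnectedSpace T] {G G' : T → Tree}
    (hG : Continuous G) (hG' : Continuous G') (h : ∀ a, (G a).proj = (G' a).proj) (a₀ : T)
    (h₀ : G a₀ = G' a₀) (a : T) : G a = G' a :=
  congrFun (Tree.isCoveringMap_proj.eq_of_comp_eq hG hG' (funext h) a₀ h₀) a

theorem Tree.descend_line_root (s θ : ℝ) :
    Tree.descend s (Tree.line Word.nil θ) = polar (θ, 0) :=
  Strip.descend_nil_of_snd_eq_zero s θ

section Compression

variable {f : C(X, X)} {A : C(ℝ, ℝ)} {d : ℤ} {Φ : C(Strip, Tree)}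

theorem Tree.exists_lift_eq_line (hA : ∀ s, polar (A s, 0) = f (polar (s, 0))) (w : Word) :
    ∃ Φ : C(Strip, Tree), (∀ z, (Φ z).proj = f (polar z)) ∧ ∀ s, Φ (s, 0) = Tree.line w (A s) := by
  obtain ⟨Φ, hΦ₀, hΦ⟩ := Tree.exists_lift (f.comp ⟨polar, continuous_polar⟩)
    (z₀ := (0, 0)) (e₀ := Tree.line w (A 0)) (hA 0)
  exact ⟨Φ, hΦ, Tree.lift_unique (by fun_prop) ((Tree.continuous_line w).comp A.continuous)
    (fun s => (hΦ _).trans (hA s).symm) 0 hΦ₀⟩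

theorem Tree.lift_add_one (hΦ : ∀ z, (Φ z).proj = f (polar z)) {z₀ : Strip}
    (h₀ : Φ (z₀.1 + 1, z₀.2) = (Φ z₀).shift d) (s : ℝ) (r : I) :
    Φ (s + 1, r) = (Φ (s, r)).shift d := by
  refine Tree.lift_unique (G := fun z : Strip => Φ (z.1 + 1, z.2)) (by fun_prop)
    ((Tree.continuous_shift d).comp Φ.continuous) (fun z => ?_) z₀ h₀ (s, r)
  rw [Function.comp_apply, Tree.proj_shift, hΦ, hΦ]
  simpa using congrArg f (polar_add_int z.1 z.2 1)

theorem apply_polar_add_half (hf : ∀ x ∈ C1, ∀ y ∈ C1, f x = f y) (s : ℝ) :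
    f (polar (s + 1 / 2, 1)) = f (polar (s, 1)) := by
  rcases exists_gate_or_polar_mem_C1 s with ⟨m, hm⟩ | ⟨hs, hs'⟩
  · rw [polar_add_half hm]
  · exact hf _ hs' _ hs

/-- The lift that is equal to `Φ (s + 1 / 2, 1)` at `(s, 1)` has its line over `C₂` in a strip whose
word is fixed by `Word.shift d`, hence in the root strip. So it differs from `Φ` by a deck
transformation. -/
theorem Tree.exists_lift_add_half_eq_shift (hd : d ≠ 0)
    (hA : ∀ s, polar (A s, 0) = f (polar (s, 0))) (hf : ∀ x ∈ C1, ∀ y ∈ C1, f x = f y)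
    (hΦ : ∀ z, (Φ z).proj = f (polar z)) (hΦ0 : ∀ s, Φ (s, 0) = Tree.line Word.nil (A s))
    (hΦd : ∀ s r, Φ (s + 1, r) = (Φ (s, r)).shift d) :
    ∃ k : ℤ, ∀ s, Φ (s + 1 / 2, 1) = (Φ (s, 1)).shift k := by
  obtain ⟨Ψ, hΨ₀, hΨ⟩ := Tree.exists_lift (f.comp ⟨polar, continuous_polar⟩) (z₀ := (0, 1))
    (e₀ := Φ (0 + 1 / 2, 1)) ((hΦ _).trans (apply_polar_add_half hf 0))
  have hΨΦ : ∀ s, Ψ (s, 1) = Φ (s + 1 / 2, 1) :=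
    Tree.lift_unique (by fun_prop) (by fun_prop)
      (fun s => (hΨ _).trans ((apply_polar_add_half hf s).symm.trans (hΦ _).symm)) 0 hΨ₀
  have hΨd : ∀ s r, Ψ (s + 1, r) = (Ψ (s, r)).shift d :=
    Tree.lift_add_one hΨ (z₀ := (0, 1)) (by rw [hΨΦ, hΨΦ, ← hΦd, add_right_comm])
  obtain ⟨w, k, hwk⟩ := Tree.exists_line_eq ((hΨ (0, 0)).trans (hA 0).symm)
  have hline : ∀ s, Ψ (s, 0) = Tree.line w (A s + k) :=
    Tree.lift_unique (by fun_prop) ((Tree.continuous_line w).comp (by fun_prop)) (fun s =>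
      (hΨ _).trans ((hA s).symm.trans (polar_add_int (A s) 0 k).symm)) 0 hwk
  have hroot : w = Word.nil := by
    refine Word.eq_nil_of_shift_eq hd (Tree.line_injective_left (θ := A 0 + k + d)
      (θ' := A (0 + 1) + k) ?_)
    rw [← hline, hΨd, hline]
    rfl
  have hΨk : ∀ z, Ψ z = (Φ z).shift k :=
    Tree.lift_unique Ψ.continuous ((Tree.continuous_shift k).comp Φ.continuous)
      (fun z => (hΨ z).trans ((hΦ z).symm.trans (Tree.proj_shift k _).symm)) (0, 0)
      (by rw [hline, hroot, hΦ0]; rfl)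
  exact ⟨k, fun s => (hΨΦ s).symm.trans (hΨk _)⟩

theorem Tree.apply_lift_eq_of_polar_eq (hΦd : ∀ s r, Φ (s + 1, r) = (Φ (s, r)).shift d) {k : ℤ}
    (hΦk : ∀ s, Φ (s + 1 / 2, 1) = (Φ (s, 1)).shift k) {Z : Type*} {β : Tree → Z}
    (hβ : ∀ m e, β (Tree.shift m e) = β e) {z z' : Strip} (h : polar z = polar z') :
    β (Φ z) = β (Φ z') := by
  have hint (θ : ℝ) (r : I) (n : ℤ) : β (Φ (θ + n, r)) = β (Φ (θ, r)) := by
    have hper : Function.Periodic (fun θ => β (Φ (θ, r))) 1 := fun θ => by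
      simp only [hΦd, hβ]
    simpa only [mul_one] using hper.int_mul n θ
  obtain ⟨θ, r⟩ := z
  obtain ⟨θ', r'⟩ := z'
  rcases polar_eq_polar_iff.1 h with ⟨rfl, n, rfl⟩ | ⟨rfl, rfl, -, n, rfl⟩
  · exact (hint _ _ _).symm
  · rw [hint, hΦk, hβ]

theorem exists_compression_into_C2 {h : MapsTo f C2 C2} (hess : Essential (restrictMap f h))
    (hf : ∀ x ∈ C1, ∀ y ∈ C1, f x = f y) :
    ∃ F : C(I × X, X), (∀ x, F (0, x) = f x) ∧ (∀ t, ∀ x ∈ C2, F (t, x) ∈ C2) ∧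
      ∀ x, F (1, x) ∈ C2 := by
  obtain ⟨A, hA, d, hd, hAd⟩ := exists_lift_of_essential hess
  obtain ⟨Φ, hΦ, hΦ0⟩ := Tree.exists_lift_eq_line hA Word.nil
  have hΦd : ∀ s r, Φ (s + 1, r) = (Φ (s, r)).shift d :=
    Tree.lift_add_one hΦ (z₀ := (0, 0)) (by rw [hΦ0, hΦ0, hAd]; rfl)
  obtain ⟨k, hΦk⟩ := Tree.exists_lift_add_half_eq_shift hd hA hf hΦ hΦ0 hΦd
  let β (t : I) (e : Tree) : X := Tree.descend ((1 - t) * e.rootTime) e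
  let F (p : I × X) : X := β p.1 (Φ (Function.surjInv polar_surjective p.2))
  have hF (t : I) (z : Strip) : F (t, polar z) = β t (Φ z) :=
    Tree.apply_lift_eq_of_polar_eq (β := β t) hΦd hΦk
      (fun m e => by simp only [β, Tree.rootTime_shift, Tree.descend_shift])
      (Function.surjInv_eq polar_surjective _)
  have hcont : Continuous F := by
    refine isQuotientMap_polar.continuous_lift_prod_right (Continuous.congr ?_ fun p =>
      (hF p.1 p.2).symm)
    have hΦ2 : Continuous fun p : I × Strip => Φ p.2 := by fun_prop
    have htime : Continuous fun p : I × Strip => (1 - (p.1 : ℝ)) * (Φ p.2).rootTime :=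
      Continuous.mul (by fun_prop) (Tree.continuous_rootTime.comp hΦ2)
    exact Tree.continuous_descend.comp (htime.prodMk hΦ2)
  refine ⟨⟨F, hcont⟩, fun x => ?_, fun t x hx => ?_, fun x => ?_⟩ <;>
    obtain ⟨⟨θ, r⟩, rfl⟩ := polar_surjective x
  · simpa [β, hF, Tree.descend_rootTime] using hΦ (θ, r)
  · obtain rfl : r = 0 := polar_mem_C2_iff.1 hx
    simp only [ContinuousMap.coe_mk, hF, hΦ0, β, Tree.descend_line_root]
    exact polar_mem_C2_iff.2 rfl
  · simpa [β, hF] using Tree.descend_zero_mem_C2 _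

end Compression

/-! ### The collar of `C₁` -/

/-- The distance `|y|` to the core circle of the Möbius band. -/
def height (x : X) : ℝ :=
  Quot.lift (fun p : Sq => |(p : ℝ × ℝ).2|)
    (by rintro p q (h | ⟨-, -, h⟩ | ⟨-, -, h⟩) <;> simp only [h, abs_neg]) x.1

theorem continuous_height : Continuous height :=
  (continuous_quot_lift _ (by fun_prop)).comp continuous_subtype_val

theorem height_le_one (x : X) : height x ≤ 1 := by
  obtain ⟨p, rfl⟩ := isQuotientMap_qX.surjective x
  exact abs_le.2 p.1.2.2

theorem mem_C1_iff_height_eq_one {x : X} : x ∈ C1 ↔ height x = 1 := by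
  obtain ⟨p, rfl⟩ := isQuotientMap_qX.surjective x
  exact qX_mem_C1_iff

theorem isClosed_C1 : IsClosed C1 := by
  have h : C1 = height ⁻¹' {1} := Set.ext fun _ => mem_C1_iff_height_eq_one
  rw [h]
  exact isClosed_singleton.preimage continuous_height

theorem height_le_of_mem_C2 {x : X} (hx : x ∈ C2) : height x ≤ 1 / 4 := by
  obtain ⟨p, rfl⟩ := isQuotientMap_qX.surjective x
  exact (le_max_right _ _).trans (mem_Scirc_iff.1 (qX_mem_C2_iff.1 hx)).le

/-- The dilation `h ↦ 1 / 4 + (h - 1 / 4) * a` of heights `h ≥ 1 / 4`, truncated at `1`, multiplies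
`h` by this number. Heights `h ≤ 1 / 4` have ratio `1`. -/
noncomputable def stretchRatio (a : ℝ≥0) (h : ℝ) : ℝ :=
  min 1 (1 / 4 + (max h (1 / 4) - 1 / 4) * a) / max h (1 / 4)

theorem continuous_stretchRatio : Continuous fun p : ℝ≥0 × ℝ => stretchRatio p.1 p.2 :=
  Continuous.div (by fun_prop) (by fun_prop) fun p =>
    ((by norm_num : (0 : ℝ) < 1 / 4).trans_le (le_max_right p.2 _)).ne'

theorem stretchRatio_nonneg (a : ℝ≥0) (h : ℝ) : 0 ≤ stretchRatio a h := by
  have hm : 1 / 4 ≤ max h (1 / 4) := le_max_right _ _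
  exact div_nonneg (le_min zero_le_one (by nlinarith [a.2])) (by linarith)

theorem stretchRatio_of_le (a : ℝ≥0) {h : ℝ} (hh : h ≤ 1 / 4) : stretchRatio a h = 1 := by
  norm_num [stretchRatio, max_eq_right hh]

theorem mul_stretchRatio (a : ℝ≥0) {h : ℝ} (hh : 1 / 4 ≤ h) :
    h * stretchRatio a h = min 1 (1 / 4 + (h - 1 / 4) * a) := by
  rw [stretchRatio, max_eq_left hh, mul_div_cancel₀ _ (by linarith)]

theorem mul_stretchRatio_le_one (a : ℝ≥0) {h : ℝ} (hh : h ≤ 1) : h * stretchRatio a h ≤ 1 := by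
  rcases le_total (1 / 4) h with h' | h'
  · exact (mul_stretchRatio a h').trans_le (min_le_left _ _)
  · rwa [stretchRatio_of_le a h', mul_one]

theorem abs_mul_stretchRatio_abs (a : ℝ≥0) (y : ℝ) :
    |y * stretchRatio a (|y|)| = |y| * stretchRatio a |y| := by
  rw [abs_mul, abs_of_nonneg (stretchRatio_nonneg a _)]

/-- The vertical dilation of the square that multiplies heights by `stretchRatio a`. -/
noncomputable def stretchSq (a : ℝ≥0) (p : Sq) : Sq :=
  ⟨((p : ℝ × ℝ).1, (p : ℝ × ℝ).2 * stretchRatio a |(p : ℝ × ℝ).2|), p.2.1,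
    abs_le.1 ((abs_mul_stretchRatio_abs a _).trans_le
      (mul_stretchRatio_le_one a (abs_le.2 p.2.2)))⟩

theorem continuous_stretchSq : Continuous fun p : ℝ≥0 × Sq => stretchSq p.1 p.2 := by
  have h : Continuous fun p : ℝ≥0 × Sq => stretchRatio p.1 |(p.2 : ℝ × ℝ).2| :=
    continuous_stretchRatio.comp (f := fun p : ℝ≥0 × Sq => (p.1, |(p.2 : ℝ × ℝ).2|)) (by fun_prop)
  unfold stretchSq
  fun_prop

theorem rel_stretchSq (a : ℝ≥0) {p q : Sq} (h : rel p q) : rel (stretchSq a p) (stretchSq a q) := by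
  rcases h with h | ⟨hp, hq, hy⟩ | ⟨hp, hq, hy⟩
  · rw [Subtype.ext h]
    exact Or.inl rfl
  · exact Or.inr (Or.inl ⟨hp, hq, by simp only [stretchSq, hy, abs_neg, neg_mul]⟩)
  · exact Or.inr (Or.inr ⟨hp, hq, by simp only [stretchSq, hy, abs_neg, neg_mul]⟩)

theorem stretchSq_notMem_Bdisc (a : ℝ≥0) {p : Sq} (hp : (p : ℝ × ℝ) ∉ Bdisc) :
    (stretchSq a p : ℝ × ℝ) ∉ Bdisc := by
  rcases le_total (1 / 4) |(p : ℝ × ℝ).2| with h | h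
  · rw [mem_Bdisc_iff, max_lt_iff, not_and_or, not_lt, not_lt, stretchSq,
      abs_mul_stretchRatio_abs, mul_stretchRatio a h]
    refine Or.inr (le_min (by norm_num) ?_)
    exact le_add_of_nonneg_right (mul_nonneg (sub_nonneg.2 h) a.2)
  · simpa only [stretchSq, stretchRatio_of_le a h, mul_one] using hp

/-- The dilation by the factor `a` of the collar `{1 / 4 ≤ height ≤ 1}` of `C₁`: a factor `a > 1`
pushes an outer part of the collar onto `C₁`, a factor `a < 1` pushes the collar off `C₁`. -/
noncomputable def stretch (a : ℝ≥0) (x : X) : X where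
  val := Quot.map (stretchSq a) (fun _ _ => rel_stretchSq a) x.1
  property := by
    obtain ⟨p, rfl⟩ := isQuotientMap_qX.surjective x
    exact qm_mem_Xset_iff.2 (stretchSq_notMem_Bdisc a (qm_mem_Xset_iff.1 p.2))

theorem continuous_stretch : Continuous fun p : ℝ≥0 × X => stretch p.1 p.2 :=
  isQuotientMap_qX.continuous_lift_prod_right (Continuous.subtype_mk (continuous_quot_mk.comp
    (continuous_stretchSq.comp (f := fun p : ℝ≥0 × PuncturedSq => (p.1, p.2.1)) (by fun_prop))) _)

theorem height_stretch (a : ℝ≥0) (x : X) :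
    height (stretch a x) = height x * stretchRatio a (height x) := by
  obtain ⟨p, rfl⟩ := isQuotientMap_qX.surjective x
  exact abs_mul_stretchRatio_abs a (p : ℝ × ℝ).2

theorem height_stretch_le (a : ℝ≥0) (x : X) : height (stretch a x) ≤ 1 / 4 + 3 / 4 * a := by
  rw [height_stretch]
  rcases le_total (1 / 4) (height x) with h | h
  · rw [mul_stretchRatio a h]
    exact (min_le_right _ _).trans (by nlinarith [height_le_one x, a.2])
  · rw [stretchRatio_of_le a h, mul_one]
    exact h.trans (le_add_of_nonneg_right (by positivity))

theorem stretch_mem_C1 {a : ℝ≥0} {x : X} (hx : 1 / 4 ≤ height x)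
    (ha : 3 / 4 ≤ (height x - 1 / 4) * a) : stretch a x ∈ C1 := by
  rw [mem_C1_iff_height_eq_one, height_stretch, mul_stretchRatio a hx]
  exact min_eq_left (by linarith)

theorem stretch_eq_self {a : ℝ≥0} {x : X} (h : stretchRatio a (height x) = 1) :
    stretch a x = x := by
  obtain ⟨p, rfl⟩ := isQuotientMap_qX.surjective x
  have hp : stretchSq a p.1 = p.1 :=
    Subtype.ext (Prod.ext rfl ((congrArg _ h).trans (mul_one _)))
  exact Subtype.ext (congrArg qm hp)

theorem stretch_of_mem_C2 (a : ℝ≥0) {x : X} (hx : x ∈ C2) : stretch a x = x :=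
  stretch_eq_self (stretchRatio_of_le a (height_le_of_mem_C2 hx))

theorem stretch_of_mem_C1 {a : ℝ≥0} (ha : 1 ≤ a) {x : X} (hx : x ∈ C1) : stretch a x = x := by
  refine stretch_eq_self ?_
  rw [← one_mul (stretchRatio _ _), mem_C1_iff_height_eq_one.1 hx, mul_stretchRatio a (by norm_num)]
  exact min_eq_left (by linarith [NNReal.one_le_coe.2 ha])

theorem stretch_one (x : X) : stretch 1 x = x := by
  have hm : max (height x) (1 / 4) ≤ 1 := max_le (height_le_one x) (by norm_num)
  refine stretch_eq_self ?_
  rw [stretchRatio, NNReal.coe_one, mul_one, add_sub_cancel, min_eq_right hm]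
  exact div_self (by positivity)

theorem BoundaryHomotopic.trans {f g h : C(X, X)} (hfg : BoundaryHomotopic f g)
    (hgh : BoundaryHomotopic g h) : BoundaryHomotopic f h := by
  obtain ⟨H, hH⟩ := hfg
  obtain ⟨K, hK⟩ := hgh
  refine ⟨H.trans K, fun x hx t => ?_⟩
  rw [ContinuousMap.Homotopy.trans_apply]
  split_ifs
  exacts [hH x hx _, hK x hx _]

/-- The part of the homotopy parameter that `x` has left when stretching by the factor `1 + t`
pushes it onto `C₁`. -/
noncomputable def excess (t : I) (x : X) : I :=
  projIcc 0 1 zero_le_one ((4 * height x - 1) / 3 * (1 + t) - 1)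

theorem continuous_excess : Continuous fun p : I × X => excess p.1 p.2 := by
  have := continuous_height
  exact continuous_projIcc.comp (by fun_prop)

theorem excess_zero (x : X) : excess 0 x = 0 :=
  projIcc_eq_zero.2 (by rw [Icc.coe_zero]; linarith [height_le_one x])

theorem excess_of_mem_C1 (t : I) {x : X} (hx : x ∈ C1) : excess t x = t := by
  have h : (4 * height x - 1) / 3 * (1 + t) - 1 = (t : ℝ) := by
    rw [mem_C1_iff_height_eq_one.1 hx]
    ring
  rw [excess, h, projIcc_val]

theorem excess_of_mem_C2 (t : I) {x : X} (hx : x ∈ C2) : excess t x = 0 :=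
  projIcc_eq_zero.2 (by nlinarith [t.2.1, height_le_of_mem_C2 hx])

theorem stretch_mem_C1_of_excess_ne_zero {t : I} {x : X} (h : excess t x ≠ 0) :
    stretch (1 + toNNReal t) x ∈ C1 := by
  have hpos : 0 < (4 * height x - 1) / 3 * (1 + t) - 1 := not_le.1 (mt projIcc_eq_zero.2 h)
  have hcoe : ((1 + toNNReal t : ℝ≥0) : ℝ) = 1 + t := by simp
  have hx : 1 / 4 ≤ height x := by
    by_contra! hx
    nlinarith [t.2.1]
  exact stretch_mem_C1 hx (by rw [hcoe]; linarith)

theorem exists_homotopy_extension {Y : Type*} [TopologicalSpace Y] (f : C(X, Y))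
    (G : C(I × C1, Y)) (hG : ∀ x, G (0, x) = f x) :
    ∃ H : C(I × X, Y), (∀ x, H (0, x) = f x) ∧ (∀ t (x : C1), H (t, x) = G (t, x)) ∧
      ∀ t, ∀ x ∈ C2, H (t, x) = f x := by
  classical
  let E (p : I × X) : Y := if h : p.2 ∈ C1 then G (p.1, ⟨p.2, h⟩) else f p.2
  have hE0 (x : X) : E (0, x) = f x := by
    by_cases h : x ∈ C1
    · exact (dif_pos h).trans (hG ⟨x, h⟩)
    · exact dif_neg h
  have hEG (t : I) (x : C1) : E (t, x) = G (t, x) := dif_pos x.2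
  have hEC : ContinuousOn E ({p | p.1 = 0} ∪ {p | p.2 ∈ C1}) := by
    refine ContinuousOn.union_of_isClosed ?_ ?_ (isClosed_eq continuous_fst continuous_const)
      (isClosed_C1.preimage continuous_snd)
    · refine (f.continuous.comp continuous_snd).continuousOn.congr ?_
      rintro ⟨_, x⟩ rfl
      exact hE0 x
    · rw [continuousOn_iff_continuous_domRestrict]
      exact (G.continuous.comp (f := fun p : {p : I × X | p.2 ∈ C1} => (p.1.1, (⟨p.1.2, p.2⟩ : C1)))
        (by fun_prop)).congr fun p => (hEG p.1.1 ⟨p.1.2, p.2⟩).symm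
  let retract (p : I × X) : I × X := (excess p.1 p.2, stretch (1 + toNNReal p.1) p.2)
  have hretract : Continuous retract := continuous_excess.prodMk
    (continuous_stretch.comp (f := fun p : I × X => (1 + toNNReal p.1, p.2)) (by fun_prop))
  refine ⟨⟨E ∘ retract, hEC.comp_continuous hretract fun p =>
    or_iff_not_imp_left.2 stretch_mem_C1_of_excess_ne_zero⟩, fun x => ?_, fun t x => ?_,
    fun t x hx => ?_⟩ <;> simp only [ContinuousMap.coe_mk, Function.comp_apply, retract]
  · rw [excess_zero, toNNReal_zero, add_zero, stretch_one, hE0]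
  · rw [excess_of_mem_C1 t x.2, stretch_of_mem_C1 (le_add_of_nonneg_right zero_le) x.2, hEG]
  · rw [excess_of_mem_C2 t hx, stretch_of_mem_C2 _ hx, hE0]

theorem exists_boundaryHomotopic_eqOn_C1_const {f : C(X, X)} (hf : BoundaryPreserving f)
    (h1 : Inessential (restrictMap f (hf.mono_left subset_union_left : MapsTo f C1 Bd))) :
    ∃ g : C(X, X), BoundaryHomotopic f g ∧ EqOn g f C2 ∧ ∃ b ∈ Bd, ∀ x ∈ C1, g x = b := by
  obtain ⟨b, ⟨K⟩⟩ := h1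
  obtain ⟨H, hH0, hHC1, hHC2⟩ := exists_homotopy_extension f
    ⟨fun p => K p, continuous_subtype_val.comp K.continuous⟩
    fun x => congrArg Subtype.val (K.apply_zero x)
  have hHBd (x : X) (hx : x ∈ Bd) (t : I) : H (t, x) ∈ Bd := by
    rcases hx with hx | hx
    · exact hHC1 t ⟨x, hx⟩ ▸ (K (t, ⟨x, hx⟩)).2
    · exact hHC2 t x hx ▸ hf (Or.inr hx)
  exact ⟨H.curry 1, ⟨⟨H, hH0, fun _ => rfl⟩, hHBd⟩, hHC2 1, b, b.2, fun x hx =>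
    (hHC1 1 ⟨x, hx⟩).trans (congrArg Subtype.val (K.apply_one ⟨x, hx⟩))⟩

/-- The part of a homotopy run at `x` when it is switched off towards `C₁`. -/
noncomputable def depth (x : X) : I :=
  projIcc 0 1 zero_le_one (4 * (1 - height x))

theorem continuous_depth : Continuous depth := by
  have := continuous_height
  exact continuous_projIcc.comp (by fun_prop)

theorem depth_of_mem_C1 {x : X} (hx : x ∈ C1) : depth x = 0 :=
  projIcc_eq_zero.2 (by rw [mem_C1_iff_height_eq_one.1 hx]; norm_num)

theorem coe_depth_of_ne_one {x : X} (hx : depth x ≠ 1) : (depth x : ℝ) = 4 * (1 - height x) := by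
  have hlt : 4 * (1 - height x) < 1 := not_le.1 (mt projIcc_eq_one.2 hx)
  rw [depth, projIcc_of_mem _ ⟨by linarith [height_le_one x], hlt.le⟩]

/-- The dilation factor `1 - u / 2`. -/
noncomputable def retreat (u : I) : ℝ≥0 :=
  (1 + toNNReal (σ u)) / 2

theorem continuous_retreat : Continuous retreat := by
  unfold retreat
  fun_prop

theorem retreat_zero : retreat 0 = 1 := by
  norm_num [retreat]

theorem coe_retreat (u : I) : (retreat u : ℝ) = 1 - u / 2 := by
  rw [retreat, NNReal.coe_div, NNReal.coe_add, coe_toNNReal, coe_symm_eq, NNReal.coe_one,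
    NNReal.coe_ofNat]
  ring

theorem mem_C1_of_stretch_retreat_eq {x y : X} (hx : depth x ≠ 1)
    (h : stretch (retreat (depth x)) y = x) : x ∈ C1 := by
  have hle := height_stretch_le (retreat (depth x)) y
  rw [h, coe_retreat, coe_depth_of_ne_one hx] at hle
  exact mem_C1_iff_height_eq_one.2 ((height_le_one x).antisymm (by linarith))

theorem exists_boundaryHomotopic_of_compression {f : C(X, X)} (hf : BoundaryPreserving f)
    {F : C(I × X, X)} (hF0 : ∀ x, F (0, x) = f x) (hFC2 : ∀ t, ∀ x ∈ C2, F (t, x) ∈ C2)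
    (hF1 : ∀ x, F (1, x) ∈ C2) :
    ∃ g : C(X, X), BoundaryHomotopic f g ∧ ∀ x, g x = x → x ∈ Bd := by
  let H (p : I × X) : X :=
    stretch (retreat (p.1 * depth p.2)) (F (p.1 * depth p.2, p.2))
  have hdepth := continuous_depth
  have hretreat := continuous_retreat
  have hH : Continuous H := continuous_stretch.comp (f := fun p : I × X =>
    (retreat (p.1 * depth p.2), F (p.1 * depth p.2, p.2))) (by fun_prop)
  have hH_of_eq_zero {t : I} {x : X} (h : t * depth x = 0) : H (t, x) = f x := by
    simp only [H, h, retreat_zero, stretch_one, hF0]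
  have hHBd (x : X) (hx : x ∈ Bd) (t : I) : H (t, x) ∈ Bd := by
    rcases hx with hx | hx
    · rw [hH_of_eq_zero (by rw [depth_of_mem_C1 hx, mul_zero])]
      exact hf (Or.inl hx)
    · have hmem := hFC2 (t * depth x) x hx
      simp only [H, stretch_of_mem_C2 _ hmem]
      exact Or.inr hmem
  refine ⟨ContinuousMap.curry ⟨H, hH⟩ 1,
    ⟨⟨⟨H, hH⟩, fun x => hH_of_eq_zero (zero_mul _), fun _ => rfl⟩, hHBd⟩, fun x hx => ?_⟩
  have hx : stretch (retreat (1 * depth x)) (F (1 * depth x, x)) = x := hx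
  rw [one_mul] at hx
  by_cases hd : depth x = 1
  · rw [hd, stretch_of_mem_C2 _ (hF1 x)] at hx
    exact Or.inr (hx ▸ hF1 x)
  · exact Or.inl (mem_C1_of_stretch_retreat_eq hd hx)

/-- A boundary semi-essential map of the punctured Möbius band with `f(C₂) ⊆ C₂`,
`f|C₂` essential and `f|C₁` inessential is boundary-homotopic to a map all of whose
fixed points lie on the boundary. -/
theorem stmt_11 (f : C(X, X)) (hf : BoundaryPreserving f)
    (h22 : MapsTo f C2 C2) (he2 : Essential (restrictMap f h22))
    (h1 : Inessential (restrictMap f (hf.mono_left Set.subset_union_left : MapsTo f C1 Bd))) :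
    ∃ g : C(X, X), BoundaryHomotopic f g ∧ ∀ x : X, g x = x → x ∈ Bd := by
  obtain ⟨f₁, hff₁, hC2, b, hb, hC1⟩ := exists_boundaryHomotopic_eqOn_C1_const hf h1
  have hf₁C2 : MapsTo f₁ C2 C2 := h22.congr hC2.symm
  have hf₁ : BoundaryPreserving f₁ := by
    rintro x (hx | hx)
    · exact hC1 x hx ▸ hb
    · exact Or.inr (hf₁C2 hx)
  have hess : Essential (restrictMap f₁ hf₁C2) := by
    have hrestrict : restrictMap f₁ hf₁C2 = restrictMap f h22 :=
      ContinuousMap.ext fun x => Subtype.ext (hC2 x.2)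
    rwa [hrestrict]
  obtain ⟨F, hF0, hFC2, hF1⟩ := exists_compression_into_C2 hess fun x hx y hy =>
    (hC1 x hx).trans (hC1 y hy).symm
  obtain ⟨g, hf₁g, hg⟩ := exists_boundaryHomotopic_of_compression hf₁ hF0 hFC2 hF1
  exact ⟨g, hff₁.trans hf₁g, hg⟩

end PMB
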